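/- There is an absolute constant C with the following property. Let (u,P,d) be a smooth solution of the nematic liquid crystal system on ℝ³×(0,T) satisfying the Schwartz decay assumption, and write ω = ∇×u. Then for every t ∈ (0,T), (d/dt)( ‖∇Δu(t,·)‖_{L²}² + ‖Δ²d(t,·)‖_{L²}² ) + ¼( ‖Δ²u(t,·)‖_{L²}² + ‖∇Δ²d(t,·)‖_{L²}² ) ≤ C( ‖ω‖_{L²}^{13/2} ‖∇Δu‖_{L²}^{3/2} + ‖Δd‖_{L²}^{14} + ‖Δd‖_{L²}^{38/7} + ‖Δd‖_{L²}^{14/5} + ‖∇ω‖_{L²}^{14} ), where all norms on the right are taken at time t. -/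

import Mathlib

open MeasureTheory Real

noncomputable section

/-- `pd i f x` is the `i`-th partial derivative `∂ᵢ f (x)` of `f : ℝⁿ → ℝ`. -/
def pd {n : ℕ} (i : Fin n) (f : EuclideanSpace ℝ (Fin n) → ℝ)
    (x : EuclideanSpace ℝ (Fin n)) : ℝ :=
  fderiv ℝ f x (EuclideanSpace.single i 1)

/-- `lap f x` is the Laplacian `Δf(x) = Σᵢ ∂ᵢ∂ᵢ f (x)`. -/
def lap {n : ℕ} (f : EuclideanSpace ℝ (Fin n) → ℝ)
    (x : EuclideanSpace ℝ (Fin n)) : ℝ :=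
  ∑ i, pd i (fun y => pd i f y) x

/-- The curl of a vector field on ℝ³, given by its component functions. -/
def curl3 (w : Fin 3 → EuclideanSpace ℝ (Fin 3) → ℝ) :
    Fin 3 → EuclideanSpace ℝ (Fin 3) → ℝ :=
  ![fun x => pd 1 (w 2) x - pd 2 (w 1) x,
    fun x => pd 2 (w 0) x - pd 0 (w 2) x,
    fun x => pd 0 (w 1) x - pd 1 (w 0) x]
/-- The simplified Ericksen–Leslie nematic liquid crystal system on ℝⁿ × (0,T). -/
structure IsNLC (n : ℕ) (T : ℝ)
    (u : ℝ → EuclideanSpace ℝ (Fin n) → EuclideanSpace ℝ (Fin n))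
    (P : ℝ → EuclideanSpace ℝ (Fin n) → ℝ)
    (d : ℝ → EuclideanSpace ℝ (Fin n) → EuclideanSpace ℝ (Fin 3)) : Prop where
  smooth_u : ContDiff ℝ (⊤ : ℕ∞) (Function.uncurry u)
  smooth_P : ContDiff ℝ (⊤ : ℕ∞) (Function.uncurry P)
  smooth_d : ContDiff ℝ (⊤ : ℕ∞) (Function.uncurry d)
  unit : ∀ t ∈ Set.Ioo (0:ℝ) T, ∀ x, ‖d t x‖ = 1
  momentum : ∀ t ∈ Set.Ioo (0:ℝ) T, ∀ x, ∀ j : Fin n,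
    deriv (fun s => u s x j) t - lap (fun y => u t y j) x
      + (∑ i, u t x i * pd i (fun y => u t y j) x) + pd j (P t) x
      = - ∑ i, pd i (fun y => ∑ k : Fin 3,
          pd i (fun z => d t z k) y * pd j (fun z => d t z k) y) x
  director : ∀ t ∈ Set.Ioo (0:ℝ) T, ∀ x, ∀ k : Fin 3,
    deriv (fun s => d s x k) t + ∑ i, u t x i * pd i (fun y => d t y k) x
      = lap (fun y => d t y k) x
        + (∑ i, ∑ k' : Fin 3, (pd i (fun y => d t y k') x) ^ 2) * d t x k
  divfree : ∀ t ∈ Set.Ioo (0:ℝ) T, ∀ x, ∑ i, pd i (fun y => u t y i) x = 0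

/-- A family of functions, Schwartz in x with seminorms locally uniformly bounded in t ∈ (0,T). -/
def SchwartzFamily {n : ℕ} (T : ℝ) (f : ℝ → EuclideanSpace ℝ (Fin n) → ℝ) : Prop :=
  ∀ t₀ ∈ Set.Ioo (0:ℝ) T, ∀ k l : ℕ, ∃ ε > 0, ∃ C : ℝ,
    ∀ t ∈ Set.Ioo (0:ℝ) T, |t - t₀| < ε →
      ∀ x, ‖x‖ ^ k * ‖iteratedFDeriv ℝ l (f t) x‖ ≤ C

/-- Schwartz decay assumption: u, ∂ₜu, ∇d, ∂ₜ∇d are Schwartz in x, locally uniformly in t. -/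
def SchwartzDecay (n : ℕ) (T : ℝ)
    (u : ℝ → EuclideanSpace ℝ (Fin n) → EuclideanSpace ℝ (Fin n))
    (d : ℝ → EuclideanSpace ℝ (Fin n) → EuclideanSpace ℝ (Fin 3)) : Prop :=
  (∀ j : Fin n, SchwartzFamily T fun t x => u t x j) ∧
  (∀ j : Fin n, SchwartzFamily T fun t x => deriv (fun s => u s x j) t) ∧
  (∀ (i : Fin n) (k : Fin 3), SchwartzFamily T fun t x => pd i (fun y => d t y k) x) ∧
  (∀ (i : Fin n) (k : Fin 3),
    SchwartzFamily T fun t x => deriv (fun s => pd i (fun y => d s y k) x) t)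

/-- ‖Δd‖_{L²} for d : ℝⁿ → ℝ³. -/
def lapL2 {n : ℕ} (d : EuclideanSpace ℝ (Fin n) → EuclideanSpace ℝ (Fin 3)) : ℝ :=
  Real.sqrt (∑ k : Fin 3, ∫ x, (lap (fun z => d z k) x) ^ 2)

/-- ‖∇Δd‖_{L²} for d : ℝⁿ → ℝ³. -/
def gradLapL2 {n : ℕ} (d : EuclideanSpace ℝ (Fin n) → EuclideanSpace ℝ (Fin 3)) : ℝ :=
  Real.sqrt (∑ i, ∑ k : Fin 3, ∫ x, (pd i (lap (fun z => d z k)) x) ^ 2)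

/-- ‖Δ²d‖_{L²} for d : ℝⁿ → ℝ³. -/
def bilapL2 {n : ℕ} (d : EuclideanSpace ℝ (Fin n) → EuclideanSpace ℝ (Fin 3)) : ℝ :=
  Real.sqrt (∑ k : Fin 3, ∫ x, (lap (lap (fun z => d z k)) x) ^ 2)

/-- ‖∇Δ²d‖_{L²} for d : ℝⁿ → ℝ³. -/
def gradBilapL2 {n : ℕ} (d : EuclideanSpace ℝ (Fin n) → EuclideanSpace ℝ (Fin 3)) : ℝ :=
  Real.sqrt (∑ i, ∑ k : Fin 3, ∫ x, (pd i (lap (lap (fun z => d z k))) x) ^ 2)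

/-- ‖∇Δu‖_{L²} for a vector field u : ℝⁿ → ℝⁿ. -/
def gradLapL2u {n : ℕ} (u : EuclideanSpace ℝ (Fin n) → EuclideanSpace ℝ (Fin n)) : ℝ :=
  Real.sqrt (∑ i, ∑ j, ∫ x, (pd i (lap (fun y => u y j)) x) ^ 2)

/-- ‖Δ²u‖_{L²} for a vector field u : ℝⁿ → ℝⁿ. -/
def bilapL2u {n : ℕ} (u : EuclideanSpace ℝ (Fin n) → EuclideanSpace ℝ (Fin n)) : ℝ :=
  Real.sqrt (∑ j, ∫ x, (lap (lap (fun y => u y j)) x) ^ 2)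

/-- ‖ω‖_{L²}: the L² norm of the vorticity ω = ∇×u on ℝ³. -/
def vortL2 (u : EuclideanSpace ℝ (Fin 3) → EuclideanSpace ℝ (Fin 3)) : ℝ :=
  Real.sqrt (∑ j, ∫ x, (curl3 (fun k y => u y k) j x) ^ 2)

/-- ‖∇ω‖_{L²}: the L² norm of the gradient of the vorticity on ℝ³. -/
def gradVortL2 (u : EuclideanSpace ℝ (Fin 3) → EuclideanSpace ℝ (Fin 3)) : ℝ :=
  Real.sqrt (∑ i, ∑ j, ∫ x, (pd i (curl3 (fun k y => u y k) j) x) ^ 2)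

/-!
The velocity equation is differentiated three times and the director equation four times, and each
is tested with the same derivative of its unknown. The pressure drops out because `u` is divergence
free, and so does the transport of `Δ²d` by `u`. Every other nonlinear term is integrated by parts
until one factor is `Δ²u` or `∇Δ²d`; by Leibniz' rule, and by `|d| ≤ 1` where `d` appears
undifferentiated, the other factor is a sum of products of derivatives of `u` and `∇d`. In dimension
three, Gagliardo–Nirenberg bounds such a product by `‖f g‖² ≤ C ‖∇f‖² ‖g‖ ‖∇g‖`. Interpolating with
`‖Λᵐ⁺²f‖² ≤ ‖Λᵐ⁺¹f‖ ‖Λᵐ⁺³f‖` leaves a monomial whose degree in the dissipation is less than one, and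
Young's inequality absorbs it: with `p` the dissipation and `R` the right-hand side of the theorem,
`z ^ (m + k) ≤ p ^ m * R ^ k` implies `z ≤ p / L + L ^ m * R` for every `L ≥ 1`. Finally
`‖ω‖ = ‖∇u‖` and `‖∇ω‖ = ‖Δu‖` for divergence-free `u`.
-/

open scoped ContDiff

/-! ### Partial derivatives -/

/-- Real-valued functions on Euclidean `n`-space. -/
abbrev ScalarField (n : ℕ) := EuclideanSpace ℝ (Fin n) → ℝ

/-- Smooth functions, with closure properties stated for pointwise operations on functions. -/
def IsSmooth {E : Type*} [NormedAddCommGroup E] [NormedSpace ℝ E] (f : E → ℝ) : Prop :=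
  ContDiff ℝ ∞ f

section Smooth

variable {E : Type*} [NormedAddCommGroup E] [NormedSpace ℝ E] {f g : E → ℝ}

namespace IsSmooth

protected lemma differentiable (hf : IsSmooth f) : Differentiable ℝ f :=
  ContDiff.differentiable hf (by simp)

protected lemma fderiv (hf : IsSmooth f) : ContDiff ℝ ∞ (fderiv ℝ f) :=
  ContDiff.fderiv_right hf (by simp)

protected lemma fderiv_apply (hf : IsSmooth f) (v : E) : IsSmooth fun x => fderiv ℝ f x v :=
  hf.fderiv.clm_apply contDiff_const

protected lemma add (hf : IsSmooth f) (hg : IsSmooth g) : IsSmooth (f + g) :=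
  ContDiff.add hf hg

protected lemma mul (hf : IsSmooth f) (hg : IsSmooth g) : IsSmooth (f * g) :=
  ContDiff.mul hf hg

protected lemma smul (c : ℝ) (hf : IsSmooth f) : IsSmooth (c • f) :=
  contDiff_const.smul hf

protected lemma sum {ι : Type*} [Fintype ι] {f : ι → E → ℝ} (hf : ∀ i, IsSmooth (f i)) :
    IsSmooth (∑ i, f i) := by
  rw [IsSmooth, Finset.sum_fn]
  exact ContDiff.sum fun i _ => hf i

end IsSmooth

lemma fderiv_fderiv_apply (hf : IsSmooth f) (v w x : E) :
    fderiv ℝ (fun y => fderiv ℝ f y v) x w = fderiv ℝ (fderiv ℝ f) x w v := by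
  rw [fderiv_clm_apply (hf.fderiv.differentiable (by simp) x) (by fun_prop)]
  simp

lemma fderiv_fderiv_apply_comm (hf : IsSmooth f) (v w x : E) :
    fderiv ℝ (fun y => fderiv ℝ f y v) x w = fderiv ℝ (fun y => fderiv ℝ f y w) x v := by
  have hsymm : IsSymmSndFDerivAt ℝ f x :=
    (ContDiff.contDiffAt hf).isSymmSndFDerivAt (by
      simp only [minSmoothness_of_isRCLikeNormedField]; exact ENat.LEInfty.out)
  rw [fderiv_fderiv_apply hf, fderiv_fderiv_apply hf]
  exact hsymm w v

end Smooth

section PartialDerivatives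

variable {n : ℕ} {f g : ScalarField n}

protected lemma IsSmooth.pd (hf : IsSmooth f) (i : Fin n) : IsSmooth (pd i f) :=
  hf.fderiv_apply _

lemma pd_add (hf : IsSmooth f) (hg : IsSmooth g) (i : Fin n) :
    pd i (f + g) = pd i f + pd i g := by
  ext x
  simp [pd, fderiv_add (hf.differentiable x) (hg.differentiable x)]

lemma pd_sub (hf : IsSmooth f) (hg : IsSmooth g) (i : Fin n) :
    pd i (f - g) = pd i f - pd i g := by
  ext x
  simp [pd, fderiv_sub (hf.differentiable x) (hg.differentiable x)]

lemma pd_smul (c : ℝ) (hf : IsSmooth f) (i : Fin n) : pd i (c • f) = c • pd i f := by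
  ext x
  simp [pd, fderiv_const_smul (hf.differentiable x)]

lemma pd_mul (hf : IsSmooth f) (hg : IsSmooth g) (i : Fin n) :
    pd i (f * g) = pd i f * g + f * pd i g := by
  ext x
  simp only [pd, fderiv_mul (hf.differentiable x) (hg.differentiable x), add_apply,
    smul_apply, smul_eq_mul, Pi.add_apply, Pi.mul_apply]
  ring

lemma pd_sum {ι : Type*} [Fintype ι] {f : ι → ScalarField n} (hf : ∀ k, IsSmooth (f k))
    (i : Fin n) : pd i (∑ k, f k) = ∑ k, pd i (f k) := by
  ext x
  simp [pd, fderiv_sum fun k _ => (hf k).differentiable x]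

lemma pd_comm (hf : IsSmooth f) (i j : Fin n) : pd i (pd j f) = pd j (pd i f) :=
  funext fun x => fderiv_fderiv_apply_comm hf _ _ x

lemma lap_eq_sum (f : ScalarField n) : lap f = ∑ i, pd i (pd i f) := by
  ext x
  simp only [lap, Finset.sum_apply]

lemma lap_add (hf : IsSmooth f) (hg : IsSmooth g) : lap (f + g) = lap f + lap g := by
  simp only [lap_eq_sum, pd_add hf hg, pd_add (hf.pd _) (hg.pd _), Finset.sum_add_distrib]

lemma lap_sub (hf : IsSmooth f) (hg : IsSmooth g) : lap (f - g) = lap f - lap g := by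
  simp only [lap_eq_sum, pd_sub hf hg, pd_sub (hf.pd _) (hg.pd _), Finset.sum_sub_distrib]

lemma lap_pd (hf : IsSmooth f) (j : Fin n) : lap (pd j f) = pd j (lap f) := by
  simp only [lap_eq_sum, pd_sum fun i => (hf.pd i).pd i]
  exact Finset.sum_congr rfl fun i _ => by rw [pd_comm hf i j, pd_comm (hf.pd i) i j]

end PartialDerivatives

/-! ### Schwartz functions -/

/-- `f` is the function underlying a Schwartz map. -/
def IsSchwartz {n : ℕ} (f : ScalarField n) : Prop :=
  ∃ g : SchwartzMap (EuclideanSpace ℝ (Fin n)) ℝ, ⇑g = f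

namespace IsSchwartz

variable {n : ℕ} {f g : ScalarField n}

protected lemma isSmooth (hf : IsSchwartz f) : IsSmooth f := by
  obtain ⟨f, rfl⟩ := hf
  exact f.smooth ⊤

protected lemma zero : IsSchwartz (0 : ScalarField n) := ⟨0, rfl⟩

protected lemma add (hf : IsSchwartz f) (hg : IsSchwartz g) : IsSchwartz (f + g) := by
  obtain ⟨f, rfl⟩ := hf
  obtain ⟨g, rfl⟩ := hg
  exact ⟨f + g, rfl⟩

protected lemma smul (c : ℝ) (hf : IsSchwartz f) : IsSchwartz (c • f) := by
  obtain ⟨f, rfl⟩ := hf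
  exact ⟨c • f, rfl⟩

protected lemma neg (hf : IsSchwartz f) : IsSchwartz (-f) := by
  obtain ⟨f, rfl⟩ := hf
  exact ⟨-f, rfl⟩

protected lemma sub (hf : IsSchwartz f) (hg : IsSchwartz g) : IsSchwartz (f - g) := by
  rw [sub_eq_add_neg]
  exact hf.add hg.neg

protected lemma sum {ι : Type*} [Fintype ι] {f : ι → ScalarField n}
    (hf : ∀ i, IsSchwartz (f i)) : IsSchwartz (∑ i, f i) :=
  Finset.sum_induction _ _ (fun _ _ => .add) .zero fun i _ => hf i

protected lemma temperate_mul (hf : f.HasTemperateGrowth) (hg : IsSchwartz g) :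
    IsSchwartz (f * g) := by
  obtain ⟨g, rfl⟩ := hg
  exact ⟨SchwartzMap.smulLeftCLM ℝ f g, by
    ext x
    rw [SchwartzMap.smulLeftCLM_apply_apply hf]
    rfl⟩

protected lemma mul (hf : IsSchwartz f) (hg : IsSchwartz g) : IsSchwartz (f * g) := by
  obtain ⟨f, rfl⟩ := hf
  exact .temperate_mul f.hasTemperateGrowth hg

open LineDeriv in
protected lemma pd (hf : IsSchwartz f) (i : Fin n) : IsSchwartz (pd i f) := by
  obtain ⟨f, rfl⟩ := hf
  exact ⟨∂_{(EuclideanSpace.single i 1 : EuclideanSpace ℝ (Fin n))} f, by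
    ext x
    rw [SchwartzMap.lineDerivOp_apply_eq_fderiv]
    rfl⟩

protected lemma lap (hf : IsSchwartz f) : IsSchwartz (lap f) := by
  rw [lap_eq_sum]
  exact .sum fun i => (hf.pd i).pd i

protected lemma integrable (hf : IsSchwartz f) : Integrable f := by
  obtain ⟨f, rfl⟩ := hf
  exact f.integrable

protected lemma memLp (hf : IsSchwartz f) (p : ENNReal) : MemLp f p := by
  obtain ⟨f, rfl⟩ := hf
  exact f.memLp p

end IsSchwartz

/-- Smooth functions with Schwartz partial derivatives. The components of a director field are of
this kind: they tend to a constant, usually nonzero, at infinity. -/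
def IsGradSchwartz {n : ℕ} (f : ScalarField n) : Prop :=
  IsSmooth f ∧ ∀ i, IsSchwartz (pd i f)

namespace IsGradSchwartz

variable {n : ℕ} {f : ScalarField n}

protected lemma isSmooth (hf : IsGradSchwartz f) : IsSmooth f := hf.1

protected lemma pd (hf : IsGradSchwartz f) (i : Fin n) : IsSchwartz (pd i f) := hf.2 i

protected lemma lap (hf : IsGradSchwartz f) : IsSchwartz (lap f) := by
  rw [lap_eq_sum]
  exact .sum fun i => (hf.pd i).pd i

end IsGradSchwartz

protected lemma IsSchwartz.isGradSchwartz {n : ℕ} {f : ScalarField n} (hf : IsSchwartz f) :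
    IsGradSchwartz f :=
  ⟨hf.isSmooth, hf.pd⟩

/-! ### The `L²` pairing -/

/-- The real `L²` pairing `∫ f g`. -/
def l2Inner {n : ℕ} (f g : ScalarField n) : ℝ := ∫ x, f x * g x

/-- The `L²` norm of a real-valued function. -/
def l2Norm {n : ℕ} (f : ScalarField n) : ℝ := √(l2Inner f f)

section L2

variable {n : ℕ} {f g h : ScalarField n}

lemma l2Inner_comm (f g : ScalarField n) : l2Inner f g = l2Inner g f :=
  integral_congr_ae (.of_forall fun _ => mul_comm _ _)

lemma l2Inner_mul_left (f g h : ScalarField n) : l2Inner (f * g) h = l2Inner f (g * h) :=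
  integral_congr_ae (.of_forall fun _ => mul_assoc _ _ _)

lemma l2Inner_smul_right (c : ℝ) (f g : ScalarField n) :
    l2Inner f (c • g) = c * l2Inner f g := by
  simp only [l2Inner, Pi.smul_apply, smul_eq_mul, mul_left_comm _ c, integral_const_mul]

lemma l2Inner_add_right (hf : IsSchwartz f) (hg : IsSchwartz g) (hh : IsSchwartz h) :
    l2Inner f (g + h) = l2Inner f g + l2Inner f h := by
  simp only [l2Inner, Pi.add_apply, mul_add]
  exact integral_add (hf.mul hg).integrable (hf.mul hh).integrable

lemma l2Inner_neg_right (f g : ScalarField n) : l2Inner f (-g) = -l2Inner f g := by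
  simp only [l2Inner, Pi.neg_apply, mul_neg, integral_neg]

lemma l2Inner_sub_right (hf : IsSchwartz f) (hg : IsSchwartz g) (hh : IsSchwartz h) :
    l2Inner f (g - h) = l2Inner f g - l2Inner f h := by
  rw [sub_eq_add_neg, l2Inner_add_right hf hg hh.neg, l2Inner_neg_right, sub_eq_add_neg]

lemma l2Inner_sum_right {ι : Type*} [Fintype ι] {g : ι → ScalarField n} (hf : IsSchwartz f)
    (hg : ∀ i, IsSchwartz (g i)) : l2Inner f (∑ i, g i) = ∑ i, l2Inner f (g i) := by
  simp only [l2Inner, Finset.sum_apply, Finset.mul_sum]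
  exact integral_finsetSum _ fun i _ => (hf.mul (hg i)).integrable

lemma l2Inner_sum_left {ι : Type*} [Fintype ι] {f : ι → ScalarField n}
    (hf : ∀ i, IsSchwartz (f i)) (hg : IsSchwartz g) :
    l2Inner (∑ i, f i) g = ∑ i, l2Inner (f i) g := by
  simp only [l2Inner_comm _ g, l2Inner_sum_right hg hf]

lemma l2Norm_nonneg (f : ScalarField n) : 0 ≤ l2Norm f := Real.sqrt_nonneg _

lemma l2Inner_self_nonneg (f : ScalarField n) : 0 ≤ l2Inner f f :=
  integral_nonneg fun _ => mul_self_nonneg _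

lemma l2Norm_sq (f : ScalarField n) : l2Norm f ^ 2 = l2Inner f f :=
  Real.sq_sqrt (l2Inner_self_nonneg f)

lemma l2Norm_eq_norm_toLp (hf : MemLp f 2) : l2Norm f = ‖hf.toLp f‖ := by
  rw [norm_eq_sqrt_real_inner (hf.toLp f), L2.inner_def, l2Norm]
  congr 1
  refine integral_congr_ae ?_
  filter_upwards [hf.coeFn_toLp] with x hx
  simp [hx, sq]

lemma l2Norm_eq_toReal_eLpNorm (hf : MemLp f 2) : l2Norm f = (eLpNorm f 2).toReal := by
  rw [l2Norm_eq_norm_toLp hf, Lp.norm_toLp]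

lemma abs_l2Inner_le (hf : MemLp f 2) (hg : MemLp g 2) :
    |l2Inner f g| ≤ l2Norm f * l2Norm g := by
  have hinner : l2Inner f g = inner ℝ (hf.toLp f) (hg.toLp g) := by
    rw [L2.inner_def]
    refine integral_congr_ae ?_
    filter_upwards [hf.coeFn_toLp, hg.coeFn_toLp] with x hfx hgx
    simp [hfx, hgx, mul_comm]
  rw [hinner, l2Norm_eq_norm_toLp hf, l2Norm_eq_norm_toLp hg]
  exact abs_real_inner_le_norm _ _

lemma l2Norm_add_le (hf : MemLp f 2) (hg : MemLp g 2) :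
    l2Norm (f + g) ≤ l2Norm f + l2Norm g := by
  rw [l2Norm_eq_norm_toLp hf, l2Norm_eq_norm_toLp hg, l2Norm_eq_norm_toLp (hf.add hg),
    MemLp.toLp_add hf hg]
  exact norm_add_le _ _

lemma l2Norm_smul (c : ℝ) (f : ScalarField n) : l2Norm (c • f) = |c| * l2Norm f := by
  rw [l2Norm, l2Inner_smul_right, l2Inner_comm, l2Inner_smul_right, ← mul_assoc,
    Real.sqrt_mul (mul_self_nonneg c), Real.sqrt_mul_self_eq_abs, l2Norm]

/-! ### Integration by parts -/

lemma l2Inner_pd_right (hf : IsSchwartz f) (hg : IsSchwartz g) (i : Fin n) :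
    l2Inner f (pd i g) = -l2Inner (pd i f) g := by
  obtain ⟨f, rfl⟩ := hf
  obtain ⟨g, rfl⟩ := hg
  exact SchwartzMap.integral_mul_lineDerivOp_right_eq_neg_left f g (EuclideanSpace.single i 1)

lemma sum_l2Inner_pd_pd (hf : IsSchwartz f) (hg : IsGradSchwartz g) :
    ∑ i, l2Inner (pd i f) (pd i g) = -l2Inner f (lap g) := by
  rw [lap_eq_sum, l2Inner_sum_right hf fun i => (hg.pd i).pd i, ← Finset.sum_neg_distrib]
  exact Finset.sum_congr rfl fun i _ => by rw [l2Inner_pd_right hf (hg.pd i), neg_neg]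

lemma l2Inner_pd_pd_comm (hf : IsGradSchwartz f) (hg : IsGradSchwartz g) (i j : Fin n) :
    l2Inner (pd i (pd j f)) (pd i (pd j g)) = l2Inner (pd i (pd i f)) (pd j (pd j g)) := by
  have hswap := l2Inner_pd_right ((hf.pd j).pd i) (hg.pd j) i
  have hswap' := l2Inner_pd_right ((hf.pd i).pd i) (hg.pd j) j
  rw [hswap, hswap', pd_comm hf.isSmooth i j, pd_comm (hf.pd i).isSmooth i j]

lemma sum_l2Norm_pd_pd_sq (hf : IsGradSchwartz f) :
    ∑ i, ∑ j, l2Norm (pd i (pd j f)) ^ 2 = l2Norm (lap f) ^ 2 := by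
  rw [l2Norm_sq, lap_eq_sum,
    l2Inner_sum_left (fun i => (hf.pd i).pd i) (.sum fun j => (hf.pd j).pd j)]
  refine Finset.sum_congr rfl fun i _ => ?_
  rw [l2Inner_sum_right ((hf.pd i).pd i) fun j => (hf.pd j).pd j]
  exact Finset.sum_congr rfl fun j _ => by rw [l2Norm_sq, l2Inner_pd_pd_comm hf hf]

lemma l2Norm_pd_pd_le (hf : IsGradSchwartz f) (i j : Fin n) :
    l2Norm (pd i (pd j f)) ≤ l2Norm (lap f) := by
  refine (pow_le_pow_iff_left₀ (l2Norm_nonneg _) (l2Norm_nonneg _) two_ne_zero).1 ?_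
  rw [← sum_l2Norm_pd_pd_sq hf]
  exact (Finset.single_le_sum (f := fun j => l2Norm (pd i (pd j f)) ^ 2)
    (fun _ _ => sq_nonneg _) (Finset.mem_univ j)).trans
    (Finset.single_le_sum (f := fun i => ∑ j, l2Norm (pd i (pd j f)) ^ 2)
    (fun _ _ => Finset.sum_nonneg fun _ _ => sq_nonneg _) (Finset.mem_univ i))

end L2

/-! ### The Sobolev inequality and products of derivatives -/

section Sobolev

variable {E : Type*} [NormedAddCommGroup E] [NormedSpace ℝ E] [FiniteDimensional ℝ E]

/-- Smooth compactly supported cutoff functions, at scale `k + 1`, increasing to `1`. -/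
def cutoff (k : ℕ) (x : E) : ℝ :=
  (⟨1, 2, one_pos, one_lt_two⟩ : ContDiffBump (0 : E)) ((k + 1 : ℝ)⁻¹ • x)

lemma contDiff_cutoff (k : ℕ) : ContDiff ℝ 1 (cutoff k : E → ℝ) :=
  (ContDiffBump.contDiff _).comp (contDiff_const_smul _)

lemma hasCompactSupport_cutoff (k : ℕ) : HasCompactSupport (cutoff k : E → ℝ) :=
  (ContDiffBump.hasCompactSupport _).comp_homeomorph
    (Homeomorph.smulOfNeZero (k + 1 : ℝ)⁻¹ (by positivity))

lemma norm_cutoff_le_one (k : ℕ) (x : E) : ‖cutoff k x‖ ≤ 1 := by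
  rw [cutoff, Real.norm_of_nonneg (ContDiffBump.nonneg _)]
  exact ContDiffBump.le_one _

lemma tendsto_cutoff (x : E) : Filter.Tendsto (cutoff · x) Filter.atTop (nhds 1) := by
  let χ : ContDiffBump (0 : E) := ⟨1, 2, one_pos, one_lt_two⟩
  have hscale : Filter.Tendsto (fun k : ℕ => (k + 1 : ℝ)⁻¹ • x) Filter.atTop (nhds 0) := by
    simpa using (tendsto_one_div_add_atTop_nhds_zero_nat (𝕜 := ℝ)).smul_const x
  have hone : χ 0 = 1 := χ.one_of_mem_closedBall (by simp [χ])
  exact hone ▸ (χ.continuous.tendsto 0).comp hscale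

variable (E) in
lemma exists_norm_fderiv_cutoff_le :
    ∃ M : ℝ, 0 ≤ M ∧ ∀ k x, ‖fderiv ℝ (cutoff k : E → ℝ) x‖ ≤ M * (k + 1 : ℝ)⁻¹ := by
  let χ : ContDiffBump (0 : E) := ⟨1, 2, one_pos, one_lt_two⟩
  have hcont : Continuous (fderiv ℝ χ) := (χ.contDiff (n := 1)).continuous_fderiv (by simp)
  obtain ⟨M, hM⟩ := (χ.hasCompactSupport.fderiv (𝕜 := ℝ)).exists_bound_of_continuous hcont
  refine ⟨M, (norm_nonneg _).trans (hM 0), fun k x => ?_⟩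
  have hcutoff : (cutoff k : E → ℝ) = fun x => χ ((k + 1 : ℝ)⁻¹ • x) := rfl
  rw [hcutoff, fderiv_comp_smul, norm_smul, mul_comm, Real.norm_of_nonneg (by positivity)]
  gcongr
  exact hM _

variable {F : Type*} [NormedAddCommGroup F] [NormedSpace ℝ F]
  [MeasurableSpace E] [BorelSpace E] {μ : Measure E}

lemma eLpNorm_fderiv_cutoff_smul_le {M : ℝ} (hM0 : 0 ≤ M)
    (hM : ∀ k x, ‖fderiv ℝ (cutoff k : E → ℝ) x‖ ≤ M * (k + 1 : ℝ)⁻¹) {u : E → F}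
    (hu : ContDiff ℝ 1 u) {p : ENNReal} (hp : 1 ≤ p) (k : ℕ) :
    eLpNorm (fderiv ℝ ((cutoff k : E → ℝ) • u)) p μ ≤
      eLpNorm (fderiv ℝ u) p μ + ENNReal.ofReal (M * (k + 1 : ℝ)⁻¹) * eLpNorm u p μ := by
  have hpointwise : ∀ x, ‖fderiv ℝ ((cutoff k : E → ℝ) • u) x‖ ≤
      ‖‖fderiv ℝ u x‖ + (M * (k + 1 : ℝ)⁻¹) * ‖u x‖‖ := fun x => by
    rw [fderiv_smul ((contDiff_cutoff k).differentiable (by simp) x)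
      (hu.differentiable (by simp) x), Real.norm_of_nonneg (by positivity)]
    refine (norm_add_le _ _).trans (add_le_add ?_ ?_)
    · rw [norm_smul]
      exact mul_le_of_le_one_left (norm_nonneg _) (norm_cutoff_le_one k x)
    · rw [ContinuousLinearMap.norm_smulRight_apply]
      gcongr
      exact hM k x
  calc eLpNorm (fderiv ℝ ((cutoff k : E → ℝ) • u)) p μ
      ≤ eLpNorm ((‖fderiv ℝ u ·‖) + (M * (k + 1 : ℝ)⁻¹) • (‖u ·‖)) p μ := eLpNorm_mono hpointwise
    _ ≤ eLpNorm (‖fderiv ℝ u ·‖) p μ + eLpNorm ((M * (k + 1 : ℝ)⁻¹) • (‖u ·‖)) p μ :=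
        eLpNorm_add_le (hu.continuous_fderiv (by simp)).norm.aestronglyMeasurable
          (hu.continuous.norm.aestronglyMeasurable.const_smul _) hp
    _ = _ := by
        rw [eLpNorm_const_smul, eLpNorm_norm, eLpNorm_norm, Real.enorm_of_nonneg (by positivity)]

/-- The Gagliardo–Nirenberg–Sobolev inequality extends from compactly supported functions to all
of `Lᵖ`: the derivative of the cutoff contributes a term which vanishes in the limit. -/
lemma eLpNorm_le_eLpNorm_fderiv_of_memLp [FiniteDimensional ℝ F] [μ.IsAddHaarMeasure] {u : E → F}
    (hu : ContDiff ℝ 1 u) {p p' : NNReal} (hp : 1 ≤ p) (hup : MemLp u p μ)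
    (hn : 0 < Module.finrank ℝ E) (hp' : (p' : ℝ)⁻¹ = p⁻¹ - (Module.finrank ℝ E : ℝ)⁻¹) :
    eLpNorm u p' μ ≤ SNormLESNormFDerivOfEqConst F μ p * eLpNorm (fderiv ℝ u) p μ := by
  set K := SNormLESNormFDerivOfEqConst F μ p
  obtain ⟨M, hM0, hM⟩ := exists_norm_fderiv_cutoff_le E
  have hcutoff : ∀ k : ℕ, eLpNorm ((cutoff k : E → ℝ) • u) p' μ ≤
      K * (eLpNorm (fderiv ℝ u) p μ + ENNReal.ofReal (M * (k + 1 : ℝ)⁻¹) * eLpNorm u p μ) :=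
    fun k => (eLpNorm_le_eLpNorm_fderiv_of_eq μ ((contDiff_cutoff k).smul hu)
      (hasCompactSupport_cutoff k).smul_right hp hn hp').trans <| by
        gcongr
        exact eLpNorm_fderiv_cutoff_smul_le hM0 hM hu (by exact_mod_cast hp) k
  have herror : Filter.Tendsto (fun k : ℕ => ENNReal.ofReal (M * (k + 1 : ℝ)⁻¹) * eLpNorm u p μ)
      Filter.atTop (nhds 0) := by
    have hscale : Filter.Tendsto (fun k : ℕ => M * (k + 1 : ℝ)⁻¹) Filter.atTop (nhds 0) := by
      simpa using (tendsto_one_div_add_atTop_nhds_zero_nat (𝕜 := ℝ)).const_mul M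
    simpa using ENNReal.Tendsto.mul_const (ENNReal.tendsto_ofReal hscale)
      (Or.inr hup.eLpNorm_ne_top)
  have hbound := ENNReal.Tendsto.const_mul (a := K)
    (herror.const_add (eLpNorm (fderiv ℝ u) p μ)) (Or.inr ENNReal.coe_ne_top)
  rw [add_zero] at hbound
  calc eLpNorm u p' μ
      ≤ Filter.liminf (fun k => eLpNorm ((cutoff k : E → ℝ) • u) p' μ) Filter.atTop :=
        Lp.eLpNorm_lim_le_liminf_eLpNorm (fun k =>
          ((contDiff_cutoff k).continuous.smul hu.continuous).aestronglyMeasurable) u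
          (.of_forall fun x => by simpa using (tendsto_cutoff x).smul_const (u x))
    _ ≤ _ := Filter.liminf_le_liminf (.of_forall hcutoff)
    _ = _ := hbound.liminf_eq

end Sobolev

lemma norm_fderiv_le_sum {n : ℕ} (f : ScalarField n) (x : EuclideanSpace ℝ (Fin n)) :
    ‖fderiv ℝ f x‖ ≤ ∑ i, ‖pd i f x‖ := by
  refine ContinuousLinearMap.opNorm_le_bound _ (Finset.sum_nonneg fun _ _ => norm_nonneg _)
    fun v => ?_
  rw [← (EuclideanSpace.basisFun (Fin n) ℝ).sum_repr v, map_sum, Finset.sum_mul,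
    (EuclideanSpace.basisFun (Fin n) ℝ).sum_repr v]
  refine (norm_sum_le _ _).trans (Finset.sum_le_sum fun i _ => ?_)
  rw [map_smul, norm_smul, mul_comm, EuclideanSpace.basisFun_apply]
  exact mul_le_mul_of_nonneg_left (PiLp.norm_apply_le v i) (norm_nonneg _)

lemma eLpNorm_fderiv_le_sum {n : ℕ} {f : ScalarField n} (hf : IsSmooth f) {p : ENNReal}
    (hp : 1 ≤ p) : eLpNorm (fderiv ℝ f) p volume ≤ ∑ i, eLpNorm (pd i f) p volume := by
  have hmeas : ∀ i ∈ (Finset.univ : Finset (Fin n)),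
      AEStronglyMeasurable (fun x => ‖pd i f x‖) volume :=
    fun i _ => (hf.pd i).differentiable.continuous.norm.aestronglyMeasurable
  calc eLpNorm (fderiv ℝ f) p volume
      ≤ eLpNorm (∑ i, fun x => ‖pd i f x‖) p volume := eLpNorm_mono_real fun x => by
        simpa only [Finset.sum_apply] using norm_fderiv_le_sum f x
    _ ≤ ∑ i, eLpNorm (fun x => ‖pd i f x‖) p volume := eLpNorm_sum_le hmeas hp
    _ = ∑ i, eLpNorm (pd i f) p volume := by simp only [eLpNorm_norm]

lemma eLpNorm_mul_mul_le {α : Type*} [MeasurableSpace α] {μ : Measure α} {f g h : α → ℝ}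
    (hf : AEStronglyMeasurable f μ) (hg : AEStronglyMeasurable g μ)
    (hh : AEStronglyMeasurable h μ) :
    eLpNorm (f * g * h) 2 μ ≤ eLpNorm f 6 μ * eLpNorm g 6 μ * eLpNorm h 6 μ := by
  have h663 : ENNReal.HolderTriple 6 6 3 := ⟨by
    rw [← ENNReal.toReal_eq_toReal_iff' (by simp) (by simp),
      ENNReal.toReal_add (by simp) (by simp)]
    norm_num⟩
  have h362 : ENNReal.HolderTriple 3 6 2 := ⟨by
    rw [← ENNReal.toReal_eq_toReal_iff' (by simp) (by simp),
      ENNReal.toReal_add (by simp) (by simp)]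
    norm_num⟩
  have hfg : eLpNorm (f * g) 3 μ ≤ eLpNorm f 6 μ * eLpNorm g 6 μ := by
    simpa only [smul_eq_mul] using eLpNorm_smul_le_mul_eLpNorm (p := 6) (q := 6) (r := 3) hg hf
  have hfgh : eLpNorm (f * g * h) 2 μ ≤ eLpNorm (f * g) 3 μ * eLpNorm h 6 μ := by
    simpa only [smul_eq_mul] using
      eLpNorm_smul_le_mul_eLpNorm (p := 3) (q := 6) (r := 2) hh (hf.mul hg)
  refine hfgh.trans ?_
  gcongr

/-- The constant `K` of the trilinear estimate `l2Norm_mul_mul_le`. -/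
def trilinearConst : ℝ :=
  (3 * SNormLESNormFDerivOfEqConst ℝ (volume : Measure (EuclideanSpace ℝ (Fin 3))) 2) ^ 3

lemma trilinearConst_nonneg : 0 ≤ trilinearConst := by
  unfold trilinearConst
  positivity

lemma eLpNorm_six_le {f : ScalarField 3} (hf : IsSchwartz f) {A : ℝ}
    (hA : ∀ i, l2Norm (pd i f) ≤ A) :
    eLpNorm f 6 volume ≤ ENNReal.ofReal
      (3 * SNormLESNormFDerivOfEqConst ℝ (volume : Measure (EuclideanSpace ℝ (Fin 3))) 2 * A) := by
  set K := SNormLESNormFDerivOfEqConst ℝ (volume : Measure (EuclideanSpace ℝ (Fin 3))) 2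
  have hpd : ∀ i, eLpNorm (pd i f) 2 volume ≤ ENNReal.ofReal A := fun i => by
    have hmem := (hf.pd i).memLp 2
    rw [← ENNReal.ofReal_toReal hmem.eLpNorm_ne_top, ← l2Norm_eq_toReal_eLpNorm hmem]
    exact ENNReal.ofReal_le_ofReal (hA i)
  calc eLpNorm f 6 volume
      ≤ K * eLpNorm (fderiv ℝ f) 2 volume :=
        eLpNorm_le_eLpNorm_fderiv_of_memLp (p := 2) (p' := 6)
          (ContDiff.of_le hf.isSmooth (by exact_mod_cast le_top)) (by norm_num) (hf.memLp 2)
          (by simp) (by norm_num)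
    _ ≤ K * ∑ _i : Fin 3, ENNReal.ofReal A := by
        gcongr
        exact (eLpNorm_fderiv_le_sum hf.isSmooth one_le_two).trans
          (Finset.sum_le_sum fun i _ => hpd i)
    _ = ENNReal.ofReal (3 * K * A) := by
        rw [mul_comm (3 : ℝ), mul_assoc, ENNReal.ofReal_mul (by positivity),
          ENNReal.ofReal_mul (by norm_num)]
        simp

lemma l2Norm_mul_mul_le {f g h : ScalarField 3} (hf : IsSchwartz f) (hg : IsSchwartz g)
    (hh : IsSchwartz h) {A B D : ℝ} (hA : ∀ i, l2Norm (pd i f) ≤ A)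
    (hB : ∀ i, l2Norm (pd i g) ≤ B) (hD : ∀ i, l2Norm (pd i h) ≤ D) :
    l2Norm (f * g * h) ≤ trilinearConst * (A * B * D) := by
  have hA0 := (l2Norm_nonneg _).trans (hA 0)
  have hB0 := (l2Norm_nonneg _).trans (hB 0)
  have hD0 := (l2Norm_nonneg _).trans (hD 0)
  set K := SNormLESNormFDerivOfEqConst ℝ (volume : Measure (EuclideanSpace ℝ (Fin 3))) 2 with hK
  have hconst : trilinearConst * (A * B * D) = 3 * K * A * (3 * K * B) * (3 * K * D) := by
    rw [trilinearConst, ← hK]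
    ring
  rw [l2Norm_eq_toReal_eLpNorm (((hf.mul hg).mul hh).memLp 2), hconst]
  refine ENNReal.toReal_le_of_le_ofReal (by positivity) ?_
  rw [ENNReal.ofReal_mul (by positivity), ENNReal.ofReal_mul (by positivity)]
  refine (eLpNorm_mul_mul_le (hf.memLp 2).aestronglyMeasurable (hg.memLp 2).aestronglyMeasurable
    (hh.memLp 2).aestronglyMeasurable).trans ?_
  gcongr
  exacts [eLpNorm_six_le hf hA, eLpNorm_six_le hg hB, eLpNorm_six_le hh hD]

lemma l2Norm_mul_sq_le {f g : ScalarField 3} (hf : IsSchwartz f) (hg : IsSchwartz g)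
    {A B D : ℝ} (hA : ∀ i, l2Norm (pd i f) ≤ A) (hB : l2Norm g ≤ B)
    (hD : ∀ i, l2Norm (pd i g) ≤ D) :
    l2Norm (f * g) ^ 2 ≤ trilinearConst * (A ^ 2 * B * D) := by
  have htri := l2Norm_mul_mul_le hf hf hg hA hA hD
  calc l2Norm (f * g) ^ 2
      = l2Inner (f * f * g) g := by
        rw [l2Norm_sq]
        exact integral_congr_ae (.of_forall fun x => by simp only [Pi.mul_apply]; ring)
    _ ≤ l2Norm (f * f * g) * l2Norm g :=
        (le_abs_self _).trans (abs_l2Inner_le (((hf.mul hf).mul hg).memLp 2) (hg.memLp 2))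
    _ ≤ trilinearConst * (A * A * D) * B :=
        mul_le_mul htri hB (l2Norm_nonneg _) ((l2Norm_nonneg _).trans htri)
    _ = trilinearConst * (A ^ 2 * B * D) := by ring

/-! ### Homogeneous Sobolev seminorms -/

section HomNorm

variable {n : ℕ} {ι : Type*}

/-- `IsPartial f m g` means that `g` is an iterated partial derivative of order `m` of one of the
functions of the family `f`. -/
inductive IsPartial (f : ι → ScalarField n) : ℕ → ScalarField n → Prop
  | base (k : ι) : IsPartial f 0 (f k)
  | succ {m : ℕ} {g : ScalarField n} (hg : IsPartial f m g) (i : Fin n) :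
    IsPartial f (m + 1) (pd i g)

namespace IsPartial

variable {f : ι → ScalarField n} {m : ℕ} {p : ScalarField n}

protected lemma isSmooth (hf : ∀ k, IsSmooth (f k)) (hp : IsPartial f m p) : IsSmooth p := by
  induction hp with
  | base k => exact hf k
  | succ _ i ih => exact ih.pd i

protected lemma isSchwartz (hf : ∀ k, IsSchwartz (f k)) (hp : IsPartial f m p) :
    IsSchwartz p := by
  induction hp with
  | base k => exact hf k
  | succ _ i ih => exact ih.pd i

protected lemma isGradSchwartz (hf : ∀ k, IsGradSchwartz (f k)) (hp : IsPartial f m p) :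
    IsGradSchwartz p := by
  induction hp with
  | base k => exact hf k
  | succ _ i ih => exact (ih.pd i).isGradSchwartz

protected lemma isSchwartz_of_pos (hf : ∀ k, IsGradSchwartz (f k)) (hp : IsPartial f m p)
    (hm : 1 ≤ m) : IsSchwartz p := by
  cases hp with
  | base => omega
  | succ hp i => exact (hp.isGradSchwartz hf).pd i

protected lemma lap (hf : ∀ k, IsSmooth (f k)) (hp : IsPartial f m p) :
    IsPartial (fun k => lap (f k)) m (lap p) := by
  induction hp with
  | base k => exact .base k
  | succ hp i ih =>
    rw [lap_pd (hp.isSmooth hf)]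
    exact ih.succ i

end IsPartial

variable [Fintype ι] {f g : ι → ScalarField n}

/-- The pairing `∫ Λᵐf · Λᵐg` of two families of functions, where `Λ = (-Δ)^{1/2}`: a pairing of
iterated Laplacians for even `m`, and of their gradients for odd `m`. -/
def homInner : ℕ → (ι → ScalarField n) → (ι → ScalarField n) → ℝ
  | 0, f, g => ∑ k, l2Inner (f k) (g k)
  | 1, f, g => ∑ k, ∑ i, l2Inner (pd i (f k)) (pd i (g k))
  | m + 2, f, g => homInner m (fun k => lap (f k)) fun k => lap (g k)

/-- The homogeneous seminorm `‖Λᵐf‖_{L²}` of a family of functions. -/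
def homNorm (m : ℕ) (f : ι → ScalarField n) : ℝ := √(homInner m f f)

lemma homInner_comm (m : ℕ) (f g : ι → ScalarField n) : homInner m f g = homInner m g f := by
  induction m using Nat.twoStepInduction generalizing f g with
  | zero => simp only [homInner, l2Inner_comm]
  | one => simp only [homInner, l2Inner_comm]
  | more _ ih _ => exact ih _ _

lemma homInner_self_nonneg (m : ℕ) (f : ι → ScalarField n) : 0 ≤ homInner m f f := by
  induction m using Nat.twoStepInduction generalizing f with
  | zero => exact Finset.sum_nonneg fun k _ => l2Inner_self_nonneg _
  | one => exact Finset.sum_nonneg fun k _ => Finset.sum_nonneg fun i _ => l2Inner_self_nonneg _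
  | more _ ih _ => exact ih _

lemma homNorm_nonneg (m : ℕ) (f : ι → ScalarField n) : 0 ≤ homNorm m f := Real.sqrt_nonneg _

lemma homNorm_sq (m : ℕ) (f : ι → ScalarField n) : homNorm m f ^ 2 = homInner m f f :=
  Real.sq_sqrt (homInner_self_nonneg m f)

lemma abs_sum_l2Inner_le {κ : Type*} [Fintype κ] {f g : κ → ScalarField n}
    (hf : ∀ k, IsSchwartz (f k)) (hg : ∀ k, IsSchwartz (g k)) :
    |∑ k, l2Inner (f k) (g k)| ≤ √(∑ k, l2Inner (f k) (f k)) * √(∑ k, l2Inner (g k) (g k)) := by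
  simp only [← l2Norm_sq]
  calc |∑ k, l2Inner (f k) (g k)|
      ≤ ∑ k, l2Norm (f k) * l2Norm (g k) := (Finset.abs_sum_le_sum_abs _ _).trans
        (Finset.sum_le_sum fun k _ => abs_l2Inner_le ((hf k).memLp 2) ((hg k).memLp 2))
    _ ≤ _ := Real.sum_mul_le_sqrt_mul_sqrt _ _ _

lemma abs_homInner_succ_le (hf : ∀ k, IsGradSchwartz (f k)) (hg : ∀ k, IsGradSchwartz (g k))
    (m : ℕ) : |homInner (m + 1) f g| ≤ homNorm (m + 1) f * homNorm (m + 1) g := by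
  induction m using Nat.twoStepInduction generalizing f g with
  | zero =>
    simp only [homNorm, homInner, ← Fintype.sum_prod_type']
    exact abs_sum_l2Inner_le (fun p => (hf p.1).pd p.2) fun p => (hg p.1).pd p.2
  | one => exact abs_sum_l2Inner_le (fun k => (hf k).lap) fun k => (hg k).lap
  | more _ ih _ => exact ih (fun k => (hf k).lap.isGradSchwartz) fun k => (hg k).lap.isGradSchwartz

lemma homInner_succ_lap (hf : ∀ k, IsGradSchwartz (f k)) (hg : ∀ k, IsGradSchwartz (g k))
    (m : ℕ) : homInner (m + 1) f (fun k => lap (g k)) = -homInner (m + 2) f g := by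
  induction m using Nat.twoStepInduction generalizing f g with
  | zero =>
    simp only [homInner, ← Finset.sum_neg_distrib]
    refine Finset.sum_congr rfl fun k _ => ?_
    rw [l2Inner_comm, ← sum_l2Inner_pd_pd (hg k).lap (hf k)]
    exact Finset.sum_congr rfl fun i _ => l2Inner_comm _ _
  | one =>
    simp only [homInner, ← Finset.sum_neg_distrib]
    exact Finset.sum_congr rfl fun k _ => by
      rw [Finset.sum_neg_distrib, sum_l2Inner_pd_pd (hf k).lap (hg k).lap.isGradSchwartz, neg_neg]
  | more _ ih _ => exact ih (fun k => (hf k).lap.isGradSchwartz) fun k => (hg k).lap.isGradSchwartz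

lemma homInner_succ_lap_self (hf : ∀ k, IsGradSchwartz (f k)) (m : ℕ) :
    homInner (m + 1) f (fun k => lap (f k)) = -homNorm (m + 2) f ^ 2 := by
  rw [homInner_succ_lap hf hf, homNorm_sq]

lemma homNorm_sq_le_mul (hf : ∀ k, IsGradSchwartz (f k)) (m : ℕ) :
    homNorm (m + 2) f ^ 2 ≤ homNorm (m + 1) f * homNorm (m + 3) f := by
  have hlap := abs_homInner_succ_le hf (fun k => (hf k).lap.isGradSchwartz) m
  rwa [homInner_succ_lap_self hf, abs_neg, abs_of_nonneg (sq_nonneg _)] at hlap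

lemma IsPartial.l2Norm_le_homNorm {m : ℕ} {p : ScalarField n}
    (hf : ∀ k, IsGradSchwartz (f k)) (hp : IsPartial f (m + 1) p) :
    l2Norm p ≤ homNorm (m + 1) f := by
  induction m using Nat.twoStepInduction generalizing f p with
  | zero =>
    obtain _ | ⟨⟨k⟩, i⟩ := hp
    refine Real.sqrt_le_sqrt ?_
    exact (Finset.single_le_sum (f := fun i => l2Inner (pd i (f k)) (pd i (f k)))
      (fun _ _ => l2Inner_self_nonneg _) (Finset.mem_univ i)).trans
      (Finset.single_le_sum
      (f := fun k => ∑ i, l2Inner (pd i (f k)) (pd i (f k)))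
      (fun _ _ => Finset.sum_nonneg fun _ _ => l2Inner_self_nonneg _) (Finset.mem_univ k))
  | one =>
    obtain _ | ⟨_ | ⟨⟨k⟩, i⟩, j⟩ := hp
    refine (l2Norm_pd_pd_le (hf k) _ _).trans (Real.sqrt_le_sqrt ?_)
    exact Finset.single_le_sum (f := fun k => l2Inner (lap (f k)) (lap (f k)))
      (fun _ _ => l2Inner_self_nonneg _) (Finset.mem_univ k)
  | more _ ih _ =>
    obtain _ | ⟨_ | ⟨hp, i⟩, j⟩ := hp
    exact (l2Norm_pd_pd_le (hp.isGradSchwartz hf) _ _).trans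
      (ih (fun k => (hf k).lap.isGradSchwartz) (hp.lap fun k => (hf k).isSmooth))

lemma homInner_succ_sub_right {h : ι → ScalarField n} (hf : ∀ k, IsGradSchwartz (f k))
    (hg : ∀ k, IsGradSchwartz (g k)) (hh : ∀ k, IsGradSchwartz (h k)) (m : ℕ) :
    homInner (m + 1) f (fun k => g k - h k) = homInner (m + 1) f g - homInner (m + 1) f h := by
  induction m using Nat.twoStepInduction generalizing f g h with
  | zero =>
    simp only [homInner, ← Finset.sum_sub_distrib]
    refine Finset.sum_congr rfl fun k _ => Finset.sum_congr rfl fun i _ => ?_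
    rw [pd_sub (hg k).isSmooth (hh k).isSmooth,
      l2Inner_sub_right ((hf k).pd i) ((hg k).pd i) ((hh k).pd i)]
  | one =>
    simp only [homInner, ← Finset.sum_sub_distrib]
    refine Finset.sum_congr rfl fun k _ => ?_
    rw [lap_sub (hg k).isSmooth (hh k).isSmooth,
      l2Inner_sub_right (hf k).lap (hg k).lap (hh k).lap]
  | more _ ih _ =>
    have hlap := ih (fun k => (hf k).lap.isGradSchwartz) (fun k => (hg k).lap.isGradSchwartz)
      fun k => (hh k).lap.isGradSchwartz
    rw [homInner, homInner, homInner, ← hlap]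
    congr 1
    exact funext fun k => lap_sub (hg k).isSmooth (hh k).isSmooth

end HomNorm

/-! ### Advection by divergence-free fields -/

section Advection

variable {n : ℕ} {v : Fin n → ScalarField n} {f g : ScalarField n}

/-- The advection operator `v · ∇` of a vector field. -/
def advect (v : Fin n → ScalarField n) (f : ScalarField n) : ScalarField n := ∑ l, v l * pd l f

/-- Divergence-free vector fields. -/
def IsDivFree (v : Fin n → ScalarField n) : Prop := ∑ l, pd l (v l) = 0

protected lemma IsDivFree.pd (hdiv : IsDivFree v) (hv : ∀ l, IsSmooth (v l)) (i : Fin n) :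
    IsDivFree fun l => pd i (v l) := by
  have hpd : pd i (∑ l, pd l (v l)) = 0 := by
    rw [show ∑ l, pd l (v l) = 0 from hdiv]
    ext x
    simp [pd]
  rw [pd_sum fun l => (hv l).pd l] at hpd
  rw [IsDivFree, ← hpd]
  exact Finset.sum_congr rfl fun l _ => pd_comm (hv l) l i

protected lemma IsDivFree.lap (hdiv : IsDivFree v) (hv : ∀ l, IsSmooth (v l)) :
    IsDivFree fun l => lap (v l) := by
  have hpd : ∀ i, ∑ l, pd l (pd i (pd i (v l))) = 0 := fun i =>
    (hdiv.pd hv i).pd (fun l => (hv l).pd i) i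
  simp only [IsDivFree, lap_eq_sum, pd_sum fun i => ((hv _).pd i).pd i]
  rw [Finset.sum_comm]
  exact Finset.sum_eq_zero fun i _ => hpd i

lemma isSmooth_advect (hv : ∀ l, IsSmooth (v l)) (hf : IsSmooth f) : IsSmooth (advect v f) :=
  .sum fun l => (hv l).mul (hf.pd l)

lemma isSchwartz_advect (hv : ∀ l, IsSchwartz (v l)) (hf : IsGradSchwartz f) :
    IsSchwartz (advect v f) :=
  .sum fun l => (hv l).mul (hf.pd l)

lemma pd_advect (hv : ∀ l, IsSmooth (v l)) (hf : IsSmooth f) (i : Fin n) :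
    pd i (advect v f) = advect (fun l => pd i (v l)) f + advect v (pd i f) := by
  simp only [advect, pd_sum fun l => (hv l).mul (hf.pd l), pd_mul (hv _) (hf.pd _),
    Finset.sum_add_distrib, pd_comm hf i]

/-- The commutator `[Δ, v · ∇]`, by `lap_advect`. -/
def lapAdvectComm (v : Fin n → ScalarField n) (f : ScalarField n) : ScalarField n :=
  ∑ i, (advect (fun l => pd i (pd i (v l))) f + (2 : ℝ) • advect (fun l => pd i (v l)) (pd i f))

lemma isSchwartz_lapAdvectComm (hv : ∀ l, IsSchwartz (v l)) (hf : IsGradSchwartz f) :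
    IsSchwartz (lapAdvectComm v f) :=
  .sum fun i => (isSchwartz_advect (fun l => ((hv l).pd i).pd i) hf).add
    ((isSchwartz_advect (fun l => (hv l).pd i) (hf.pd i).isGradSchwartz).smul 2)

lemma lap_advect (hv : ∀ l, IsSmooth (v l)) (hf : IsSmooth f) :
    lap (advect v f) = lapAdvectComm v f + advect v (lap f) := by
  have hsum : advect v (lap f) = ∑ i, advect v (pd i (pd i f)) := by
    simp only [advect, lap_eq_sum f, pd_sum fun i => (hf.pd i).pd i, Finset.mul_sum]
    rw [Finset.sum_comm]
  rw [lap_eq_sum, lapAdvectComm, hsum, ← Finset.sum_add_distrib]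
  refine Finset.sum_congr rfl fun i _ => ?_
  rw [pd_advect hv hf, pd_add (isSmooth_advect (fun l => (hv l).pd i) hf)
    (isSmooth_advect hv (hf.pd i)), pd_advect (fun l => (hv l).pd i) hf,
    pd_advect hv (hf.pd i)]
  module

lemma l2Inner_advect (hv : ∀ l, IsSchwartz (v l)) (hdiv : IsDivFree v) (hf : IsSchwartz f)
    (hg : IsSchwartz g) : l2Inner f (advect v g) = -l2Inner (advect v f) g := by
  have hterm : ∀ l, l2Inner f (v l * pd l g) =
      -l2Inner g (f * pd l (v l)) - l2Inner g (v l * pd l f) := fun l => by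
    rw [← l2Inner_mul_left, l2Inner_pd_right (hf.mul (hv l)) hg, pd_mul hf.isSmooth (hv l).isSmooth,
      l2Inner_comm, l2Inner_add_right hg ((hf.pd l).mul (hv l)) (hf.mul ((hv l).pd l)),
      mul_comm (pd l f)]
    ring
  have hdiv_term : ∑ l, l2Inner g (f * pd l (v l)) = 0 := by
    rw [← l2Inner_sum_right hg fun l => hf.mul ((hv l).pd l), ← Finset.mul_sum,
      show ∑ l, pd l (v l) = 0 from hdiv]
    simp [l2Inner]
  rw [l2Inner_comm (advect v f), advect, advect,
    l2Inner_sum_right hf fun l => (hv l).mul (hg.pd l), Finset.sum_congr rfl fun l _ => hterm l,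
    Finset.sum_sub_distrib, Finset.sum_neg_distrib, hdiv_term,
    l2Inner_sum_right hg fun l => (hv l).mul (hf.pd l)]
  ring

lemma l2Inner_advect_self (hv : ∀ l, IsSchwartz (v l)) (hdiv : IsDivFree v) (hf : IsSchwartz f) :
    l2Inner f (advect v f) = 0 := by
  linarith [l2Inner_advect hv hdiv hf hf, l2Inner_comm f (advect v f)]

lemma homInner_succ_grad (hv : ∀ l, IsSchwartz (v l)) (hdiv : IsDivFree v)
    (hf : IsGradSchwartz f) (m : ℕ) : homInner (m + 1) v (fun l => pd l f) = 0 := by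
  have hgrad : ∀ {w : Fin n → ScalarField n} {g : ScalarField n}, (∀ l, IsSchwartz (w l)) →
      IsDivFree w → IsSchwartz g → ∑ l, l2Inner (w l) (pd l g) = 0 := fun hw hwdiv hg => by
    simp only [l2Inner_pd_right (hw _) hg, Finset.sum_neg_distrib]
    rw [← l2Inner_sum_left (fun l => (hw l).pd l) hg, show ∑ l, pd l _ = 0 from hwdiv]
    simp [l2Inner]
  have hvs := fun l => (hv l).isSmooth
  induction m using Nat.twoStepInduction generalizing v f with
  | zero =>
    rw [homInner, Finset.sum_comm]
    refine Finset.sum_eq_zero fun i _ => ?_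
    simp only [pd_comm hf.isSmooth i]
    exact hgrad (fun l => (hv l).pd i) (hdiv.pd hvs i) (hf.pd i)
  | one =>
    simp only [homInner, lap_pd hf.isSmooth]
    exact hgrad (fun l => (hv l).lap) (hdiv.lap hvs) hf.lap
  | more _ ih _ =>
    simp only [homInner, lap_pd hf.isSmooth]
    exact ih (fun l => (hv l).lap) (hdiv.lap hvs) hf.lap.isGradSchwartz
      fun l => (hv l).lap.isSmooth

end Advection

/-! ### Products of derivatives -/

section Bounds

variable {n : ℕ} {f g : ScalarField n} {M N : ℝ}

/-- Schwartz functions with `L²` norm at most `M`. -/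
def HasL2Bound (f : ScalarField n) (M : ℝ) : Prop := IsSchwartz f ∧ l2Norm f ≤ M

namespace HasL2Bound

protected lemma add (hf : HasL2Bound f M) (hg : HasL2Bound g N) : HasL2Bound (f + g) (M + N) :=
  ⟨hf.1.add hg.1, (l2Norm_add_le (hf.1.memLp 2) (hg.1.memLp 2)).trans (add_le_add hf.2 hg.2)⟩

protected lemma smul {c : ℝ} (hc : 0 ≤ c) (hf : HasL2Bound f M) : HasL2Bound (c • f) (c * M) :=
  ⟨hf.1.smul c, by
    rw [l2Norm_smul, abs_of_nonneg hc]
    exact mul_le_mul_of_nonneg_left hf.2 hc⟩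

protected lemma sum {ι : Type*} [Fintype ι] {f : ι → ScalarField n}
    (hf : ∀ i, HasL2Bound (f i) M) : HasL2Bound (∑ i, f i) (Fintype.card ι * M) := by
  rw [← Finset.card_univ]
  induction (Finset.univ : Finset ι) using Finset.cons_induction with
  | empty => exact ⟨.zero, by simp [l2Norm, l2Inner]⟩
  | cons i s his ih =>
    rw [Finset.sum_cons, Finset.card_cons, Nat.cast_succ, add_comm (s.card : ℝ), add_mul, one_mul]
    exact (hf i).add ih

protected lemma abs_l2Inner_le (hg : HasL2Bound g M) (hf : IsSchwartz f) :
    |l2Inner f g| ≤ l2Norm f * M :=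
  (_root_.abs_l2Inner_le (hf.memLp 2) (hg.1.memLp 2)).trans
    (mul_le_mul_of_nonneg_left hg.2 (l2Norm_nonneg f))

end HasL2Bound

lemma IsGradSchwartz.hasTemperateGrowth (hg : IsGradSchwartz g) (hM : ∀ x, |g x| ≤ M) :
    g.HasTemperateGrowth := by
  have hfderiv : fderiv ℝ g = fun x => ∑ i, pd i g x •
      (EuclideanSpace.proj i : EuclideanSpace ℝ (Fin n) →L[ℝ] ℝ) := by
    ext x w
    conv_lhs => rw [← (EuclideanSpace.basisFun (Fin n) ℝ).sum_repr w]
    simp [pd, mul_comm]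
  refine .of_fderiv ?_ hg.isSmooth.differentiable (k := 0) (C := M) fun x => by simpa using hM x
  rw [hfderiv]
  refine .sum fun i _ => ?_
  obtain ⟨φ, hφ⟩ := hg.pd i
  exact (hφ ▸ φ.hasTemperateGrowth).smul (.const _)

lemma HasL2Bound.mul_of_abs_le_one (hf : HasL2Bound f M) (hg : IsGradSchwartz g)
    (hg1 : ∀ x, |g x| ≤ 1) : HasL2Bound (f * g) M := by
  have hfg : IsSchwartz (f * g) := mul_comm g f ▸ hf.1.temperate_mul (hg.hasTemperateGrowth hg1)
  refine ⟨hfg, le_trans (Real.sqrt_le_sqrt ?_) hf.2⟩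
  refine integral_mono (hfg.mul hfg).integrable (hf.1.mul hf.1).integrable fun x => ?_
  have hgx : g x * g x ≤ 1 := by
    rw [← abs_mul_abs_self]
    exact mul_le_one₀ (hg1 x) (abs_nonneg _) (hg1 x)
  simp only [Pi.mul_apply]
  nlinarith [mul_le_mul_of_nonneg_left hgx (mul_self_nonneg (f x))]

/-- Functions all of whose partial derivatives of order `m` are Schwartz with `L²` norm at
most `M`. -/
def HasDerivL2Bound : ℕ → ScalarField n → ℝ → Prop
  | 0, f, M => HasL2Bound f M
  | m + 1, f, M => ∀ i, HasDerivL2Bound m (pd i f) M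

namespace HasDerivL2Bound

variable {m : ℕ}

protected lemma add (hfs : IsSmooth f) (hgs : IsSmooth g) (hf : HasDerivL2Bound m f M)
    (hg : HasDerivL2Bound m g N) : HasDerivL2Bound m (f + g) (M + N) := by
  induction m generalizing f g with
  | zero => exact HasL2Bound.add hf hg
  | succ m ih =>
    intro i
    rw [pd_add hfs hgs]
    exact ih (hfs.pd i) (hgs.pd i) (hf i) (hg i)

protected lemma smul {c : ℝ} (hc : 0 ≤ c) (hfs : IsSmooth f) (hf : HasDerivL2Bound m f M) :
    HasDerivL2Bound m (c • f) (c * M) := by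
  induction m generalizing f with
  | zero => exact HasL2Bound.smul hc hf
  | succ m ih =>
    intro i
    rw [pd_smul c hfs]
    exact ih (hfs.pd i) (hf i)

protected lemma sum {ι : Type*} [Fintype ι] {f : ι → ScalarField n} (hfs : ∀ k, IsSmooth (f k))
    (hf : ∀ k, HasDerivL2Bound m (f k) M) :
    HasDerivL2Bound m (∑ k, f k) (Fintype.card ι * M) := by
  induction m generalizing f with
  | zero => exact HasL2Bound.sum hf
  | succ m ih =>
    intro i
    rw [pd_sum hfs]
    exact ih (fun k => (hfs k).pd i) fun k => hf k i

lemma hasL2Bound_lap (hf : HasDerivL2Bound 2 f M) : HasL2Bound (lap f) (n * M) := by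
  have hsum := HasL2Bound.sum fun i => hf i i
  rwa [← lap_eq_sum, Fintype.card_fin] at hsum

lemma hasL2Bound_pd_lap (hfs : IsSmooth f) (hf : HasDerivL2Bound 3 f M) (j : Fin n) :
    HasL2Bound (pd j (lap f)) (n * M) := by
  rw [← lap_pd hfs]
  exact hasL2Bound_lap (hf j)

variable {ι κ ι' : Type*} {p : ι → ScalarField n} {q : κ → ScalarField n} {r : ι' → ScalarField n}
  {a b c : ℕ} {f g h : ScalarField n} {σ : ℝ}

lemma mul_of_isPartial (hp : ∀ k, IsSmooth (p k)) (hq : ∀ k, IsSmooth (q k))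
    (hf : IsPartial p a f) (hg : IsPartial q b g)
    (hfg : ∀ a' b' f' g', a ≤ a' → b ≤ b' → a' + b' = a + b + m → IsPartial p a' f' →
      IsPartial q b' g' → HasL2Bound (f' * g') σ) :
    HasDerivL2Bound m (f * g) (2 ^ m * σ) := by
  induction m generalizing a b f g with
  | zero => simpa [HasDerivL2Bound] using hfg a b f g le_rfl le_rfl rfl hf hg
  | succ m ih =>
    intro i
    have hfs := hf.isSmooth hp
    have hgs := hg.isSmooth hq
    rw [pd_mul hfs hgs, pow_succ', mul_assoc, two_mul]
    exact .add ((hfs.pd i).mul hgs) (hfs.mul (hgs.pd i))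
      (ih (hf.succ i) hg fun a' b' f' g' ha hb hab =>
        hfg a' b' f' g' (by omega) hb (by omega))
      (ih hf (hg.succ i) fun a' b' f' g' ha hb hab =>
        hfg a' b' f' g' ha (by omega) (by omega))

lemma mul_mul_of_isPartial (hp : ∀ k, IsSmooth (p k)) (hq : ∀ k, IsSmooth (q k))
    (hr : ∀ k, IsSmooth (r k)) (hf : IsPartial p a f) (hg : IsPartial q b g) (hh : IsPartial r c h)
    (hfgh : ∀ a' b' c' f' g' h', a ≤ a' → b ≤ b' → a' + b' + c' = a + b + c + m →
      IsPartial p a' f' → IsPartial q b' g' → IsPartial r c' h' → HasL2Bound (f' * g' * h') σ) :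
    HasDerivL2Bound m (f * g * h) (3 ^ m * σ) := by
  induction m generalizing a b c f g h with
  | zero => simpa [HasDerivL2Bound] using hfgh a b c f g h le_rfl le_rfl rfl hf hg hh
  | succ m ih =>
    intro i
    have hfs := hf.isSmooth hp
    have hgs := hg.isSmooth hq
    have hhs := hh.isSmooth hr
    rw [pd_mul (hfs.mul hgs) hhs, pd_mul hfs hgs, add_mul,
      show 3 ^ (m + 1) * σ = 3 ^ m * σ + 3 ^ m * σ + 3 ^ m * σ by ring]
    have hfm := ((hfs.pd i).mul hgs).mul hhs
    have hgm := (hfs.mul (hgs.pd i)).mul hhs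
    exact .add (hfm.add hgm) ((hfs.mul hgs).mul (hhs.pd i))
      (.add hfm hgm
        (ih (hf.succ i) hg hh fun a' b' c' f' g' h' ha hb hab =>
          hfgh a' b' c' f' g' h' (by omega) hb (by omega))
        (ih hf (hg.succ i) hh fun a' b' c' f' g' h' ha hb hab =>
          hfgh a' b' c' f' g' h' ha (by omega) (by omega)))
      (ih hf hg (hh.succ i) fun a' b' c' f' g' h' ha hb hab =>
        hfgh a' b' c' f' g' h' ha hb (by omega))

end HasDerivL2Bound

end Bounds

/-! ### Energy estimates -/

section Energy

variable {n : ℕ} {κ : Type*} {v : Fin n → ScalarField n} {e : κ → ScalarField n}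
  {f g : ScalarField n} {M B σ : ℝ}

lemma abs_l2Inner_lap_le (hf : IsSchwartz f) (hg : IsGradSchwartz g)
    (hB : ∀ i, l2Norm (pd i f) ≤ B) (hM : ∀ i, HasL2Bound (pd i g) M) :
    |l2Inner f (lap g)| ≤ n * (B * M) := by
  rw [← neg_eq_iff_eq_neg.2 (sum_l2Inner_pd_pd hf hg), abs_neg]
  calc |∑ i, l2Inner (pd i f) (pd i g)|
      ≤ ∑ i, |l2Inner (pd i f) (pd i g)| := Finset.abs_sum_le_sum_abs _ _
    _ ≤ ∑ _i : Fin n, B * M := Finset.sum_le_sum fun i _ => ((hM i).abs_l2Inner_le (hf.pd i)).trans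
        (mul_le_mul_of_nonneg_right (hB i) ((l2Norm_nonneg _).trans (hM i).2))
    _ = n * (B * M) := by simp

lemma abs_l2Inner_advect_le (hv : ∀ l, IsSchwartz (v l)) (hdiv : IsDivFree v) (hf : IsSchwartz f)
    (hg : IsSchwartz g) (hB : ∀ l, l2Norm (pd l f) ≤ B) (hM : ∀ l, HasL2Bound (v l * g) M) :
    |l2Inner f (advect v g)| ≤ n * (B * M) := by
  have hterm : ∀ l, l2Inner (v l * pd l f) g = l2Inner (pd l f) (v l * g) := fun l => by
    rw [mul_comm, l2Inner_mul_left]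
  rw [l2Inner_advect hv hdiv hf hg, abs_neg, advect,
    l2Inner_sum_left (fun l => (hv l).mul (hf.pd l)) hg]
  simp only [hterm]
  calc |∑ l, l2Inner (pd l f) (v l * g)|
      ≤ ∑ l, |l2Inner (pd l f) (v l * g)| := Finset.abs_sum_le_sum_abs _ _
    _ ≤ ∑ _l : Fin n, B * M := Finset.sum_le_sum fun l _ => ((hM l).abs_l2Inner_le (hf.pd l)).trans
        (mul_le_mul_of_nonneg_right (hB l) ((l2Norm_nonneg _).trans (hM l).2))
    _ = n * (B * M) := by simp

/-- A velocity field and a director field at a fixed time. -/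
structure IsState (v : Fin n → ScalarField n) (e : κ → ScalarField n) : Prop where
  vel : ∀ l, IsSchwartz (v l)
  divFree : IsDivFree v
  dir : ∀ k, IsGradSchwartz (e k)
  abs_dir_le_one : ∀ k x, |e k x| ≤ 1

/-- A common `L²` bound `σ` for the products of derivatives to which the nonlinear terms of the
equations for `Λ³v` and `Λ⁴e` reduce. -/
structure HasProductBounds (v : Fin n → ScalarField n) (e : κ → ScalarField n) (σ : ℝ) :
    Prop where
  vel {a b : ℕ} {p q : ScalarField n} : 1 ≤ b → a + b = 3 → IsPartial v a p →
    IsPartial v b q → HasL2Bound (p * q) σ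
  dir {a b : ℕ} {p q : ScalarField n} : 1 ≤ a → 1 ≤ b → a + b = 5 → IsPartial e a p →
    IsPartial e b q → HasL2Bound (p * q) σ
  mixed {a b : ℕ} {p q : ScalarField n} : 1 ≤ a → 1 ≤ b → a + b = 4 → IsPartial v a p →
    IsPartial e b q → HasL2Bound (p * q) σ
  triple {a b c : ℕ} {p q r : ScalarField n} : 1 ≤ a → 1 ≤ b → 1 ≤ c → a + b + c = 5 →
    IsPartial e a p → IsPartial e b q → IsPartial e c r → HasL2Bound (p * q * r) σ

lemma HasProductBounds.mul_lap (hσ : HasProductBounds v e σ) {a b : ℕ} {p q : ScalarField n}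
    (hp : IsPartial v a p) (hq : IsPartial e b q) (ha : 1 ≤ a) (hab : a + b = 2) :
    HasL2Bound (p * lap q) (n * σ) := by
  have hsum := HasL2Bound.sum fun i =>
    hσ.mixed ha (by omega) (by omega) hp ((hq.succ i).succ i)
  rwa [← Finset.mul_sum, ← lap_eq_sum, Fintype.card_fin] at hsum

namespace IsState

section NonlinearTerms

variable (hs : IsState v e) (hσ : HasProductBounds v e σ)
include hs hσ

lemma hasDerivL2Bound_advect_vel (j : Fin n) :
    HasDerivL2Bound 2 (advect v (v j)) (n * (2 ^ 2 * σ)) := by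
  have hvs := fun l => (hs.vel l).isSmooth
  have hsum := HasDerivL2Bound.sum (fun l => (hvs l).mul ((hvs j).pd l)) fun l =>
    HasDerivL2Bound.mul_of_isPartial (m := 2) hvs hvs (.base l) ((IsPartial.base j).succ l)
      fun _ _ _ _ _ hb hab => hσ.vel hb (by omega)
  rwa [Fintype.card_fin] at hsum

lemma hasL2Bound_mul_mul {a b c : ℕ} {p q r : ScalarField n} (ha : 1 ≤ a) (hb : 1 ≤ b)
    (habc : a + b + c = 5) (hp : IsPartial e a p) (hq : IsPartial e b q) (hr : IsPartial e c r) :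
    HasL2Bound (p * q * r) σ := by
  cases hr with
  | base k => exact (hσ.dir ha hb habc hp hq).mul_of_abs_le_one (hs.dir k) (hs.abs_dir_le_one k)
  | succ hr i => exact hσ.triple ha hb (by omega) habc hp hq (hr.succ i)

lemma hasDerivL2Bound_advect_dir {a b : ℕ} {w : Fin n → ScalarField n} {q : ScalarField n}
    (hw : ∀ l, IsPartial v a (w l)) (hq : IsPartial e b q) (ha : 1 ≤ a) (hab : a + b = 2) :
    HasDerivL2Bound 1 (advect w q) (n * (2 ^ 1 * σ)) := by
  have hvs := fun l => (hs.vel l).isSmooth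
  have hes := fun k => (hs.dir k).isSmooth
  have hsum := HasDerivL2Bound.sum (fun l => ((hw l).isSmooth hvs).mul ((hq.isSmooth hes).pd l))
    fun l => HasDerivL2Bound.mul_of_isPartial (m := 1) hvs hes (hw l) (hq.succ l)
      fun _ _ _ _ ha' hb' hab' => hσ.mixed (by omega) (by omega) (by omega)
  rwa [Fintype.card_fin] at hsum

lemma hasDerivL2Bound_lapAdvectComm (k : κ) :
    HasDerivL2Bound 1 (lapAdvectComm v (e k))
      (n * (n * (2 ^ 1 * σ) + 2 * (n * (2 ^ 1 * σ)))) := by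
  have hvs := fun l => (hs.vel l).isSmooth
  have hes := (hs.dir k).isSmooth
  have hsmooth := fun i => isSmooth_advect (fun l => ((hvs l).pd i).pd i) hes
  have hsmooth' := fun i => isSmooth_advect (fun l => (hvs l).pd i) (hes.pd i)
  have hsum := HasDerivL2Bound.sum (m := 1)
    (fun i => (hsmooth i).add ((hsmooth' i).smul 2)) fun i =>
      .add (hsmooth i) ((hsmooth' i).smul 2)
        (hs.hasDerivL2Bound_advect_dir hσ (fun l => ((IsPartial.base l).succ i).succ i) (.base k)
          one_le_two rfl)
        (.smul zero_le_two (hsmooth' i) (hs.hasDerivL2Bound_advect_dir hσ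
          (fun l => (IsPartial.base l).succ i) ((IsPartial.base k).succ i) le_rfl rfl))
  rwa [Fintype.card_fin] at hsum

end NonlinearTerms

end IsState

variable [Fintype κ]

/-- The elastic force `∇ · (∇e ⊙ ∇e)`. -/
def elasticForce (e : κ → ScalarField n) (j : Fin n) : ScalarField n :=
  ∑ i, pd i (∑ k, pd i (e k) * pd j (e k))

/-- The source `|∇e|² e_k` of the harmonic map heat flow. -/
def harmonicSource (e : κ → ScalarField n) (k : κ) : ScalarField n :=
  ∑ i, ∑ l, pd i (e l) * pd i (e l) * e k

namespace IsState

variable (hs : IsState v e)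
include hs

lemma isSchwartz_elasticForce (j : Fin n) : IsSchwartz (elasticForce e j) :=
  .sum fun i => .pd (.sum fun k => ((hs.dir k).pd i).mul ((hs.dir k).pd j)) i

lemma isSchwartz_harmonicSource (k : κ) : IsSchwartz (harmonicSource e k) :=
  .sum fun i => .sum fun l => mul_comm (e k) _ ▸
    (((hs.dir l).pd i).mul ((hs.dir l).pd i)).temperate_mul
      ((hs.dir k).hasTemperateGrowth (hs.abs_dir_le_one k))

variable (hσ : HasProductBounds v e σ)
include hσ

lemma hasDerivL2Bound_elasticForce (j : Fin n) :
    HasDerivL2Bound 2 (elasticForce e j) (n * (Fintype.card κ * (2 ^ 3 * σ))) := by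
  have hes := fun k => (hs.dir k).isSmooth
  have hprod : ∀ i k, IsSmooth (pd i (e k) * pd j (e k)) := fun i k =>
    ((hes k).pd i).mul ((hes k).pd j)
  have hstress : ∀ i, HasDerivL2Bound 3 (∑ k, pd i (e k) * pd j (e k))
      (Fintype.card κ * (2 ^ 3 * σ)) := fun i => .sum (hprod i) fun k =>
    .mul_of_isPartial hes hes ((IsPartial.base k).succ i) ((IsPartial.base k).succ j)
      fun _ _ _ _ ha hb hab => hσ.dir ha hb (by omega)
  have hsum := HasDerivL2Bound.sum (m := 2) (fun i => (IsSmooth.sum (hprod i)).pd i)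
    fun i => hstress i i
  rwa [Fintype.card_fin] at hsum

lemma hasDerivL2Bound_harmonicSource (k : κ) :
    HasDerivL2Bound 3 (harmonicSource e k) (n * (Fintype.card κ * (3 ^ 3 * σ))) := by
  have hes := fun k => (hs.dir k).isSmooth
  have hprod : ∀ i l, IsSmooth (pd i (e l) * pd i (e l) * e k) := fun i l =>
    (((hes l).pd i).mul ((hes l).pd i)).mul (hes k)
  have hterm : ∀ i l, HasDerivL2Bound 3 (pd i (e l) * pd i (e l) * e k) (3 ^ 3 * σ) := fun i l =>
    .mul_mul_of_isPartial hes hes hes ((IsPartial.base l).succ i) ((IsPartial.base l).succ i)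
      (.base k) fun _ _ _ _ _ _ ha hb habc =>
        hs.hasL2Bound_mul_mul hσ ha hb (by omega)
  have hsum := HasDerivL2Bound.sum (fun i => .sum (hprod i)) fun i => .sum (hprod i) (hterm i)
  rwa [Fintype.card_fin] at hsum

end IsState

variable {g : κ → ScalarField n}

lemma l2Norm_pd_lap_lap_le (he : ∀ k, IsGradSchwartz (e k)) (k : κ) (i : Fin n) :
    l2Norm (pd i (lap (lap (e k)))) ≤ homNorm 5 e :=
  IsPartial.l2Norm_le_homNorm (m := 0) (fun k => (he k).lap.lap.isGradSchwartz)
    ((IsPartial.base k).succ i)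

lemma l2Norm_lap_lap_le (e : κ → ScalarField n) (k : κ) :
    l2Norm (lap (lap (e k))) ≤ homNorm 4 e :=
  Real.sqrt_le_sqrt <| Finset.single_le_sum
    (f := fun k => l2Inner (lap (lap (e k))) (lap (lap (e k))))
    (fun _ _ => l2Inner_self_nonneg _) (Finset.mem_univ k)

lemma abs_homInner_three_le (he : ∀ k, IsGradSchwartz (e k)) (hg : ∀ k, IsGradSchwartz (g k))
    (hM : ∀ k, HasL2Bound (lap (g k)) M) :
    |homInner 3 e g| ≤ Fintype.card κ * (homNorm 4 e * M) := by
  rw [homInner_comm, ← neg_eq_iff_eq_neg.2 (homInner_succ_lap hg he 1), abs_neg, homInner_comm]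
  calc |∑ k, l2Inner (lap (lap (e k))) (lap (g k))|
      ≤ ∑ k, |l2Inner (lap (lap (e k))) (lap (g k))| := Finset.abs_sum_le_sum_abs _ _
    _ ≤ ∑ _k : κ, homNorm 4 e * M := Finset.sum_le_sum fun k _ =>
        ((hM k).abs_l2Inner_le (he k).lap.lap).trans
          (mul_le_mul_of_nonneg_right (l2Norm_lap_lap_le e k) ((l2Norm_nonneg _).trans (hM k).2))
    _ = Fintype.card κ * (homNorm 4 e * M) := by simp

lemma abs_homInner_four_le (hM : ∀ k, |l2Inner (lap (lap (e k))) (lap (lap (g k)))| ≤ M) :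
    |homInner 4 e g| ≤ Fintype.card κ * M := by
  calc |∑ k, l2Inner (lap (lap (e k))) (lap (lap (g k)))|
      ≤ ∑ k, |l2Inner (lap (lap (e k))) (lap (lap (g k)))| := Finset.abs_sum_le_sum_abs _ _
    _ ≤ ∑ _k : κ, M := Finset.sum_le_sum fun k _ => hM k
    _ = Fintype.card κ * M := by simp

end Energy

section EnergyInequalities

variable {n : ℕ} {κ : Type*} [Fintype κ] {v : Fin n → ScalarField n} {e : κ → ScalarField n}
  {q : ScalarField n} {σ : ℝ}

/-- The time derivative of the velocity in the Ericksen–Leslie system with pressure `q`. -/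
def momentumRHS (v : Fin n → ScalarField n) (e : κ → ScalarField n) (q : ScalarField n) :
    Fin n → ScalarField n :=
  fun j => lap (v j) - (advect v (v j) + elasticForce e j) - pd j q

/-- The time derivative of the director in the Ericksen–Leslie system. -/
def directorRHS (v : Fin n → ScalarField n) (e : κ → ScalarField n) : κ → ScalarField n :=
  fun k => lap (e k) - (advect v (e k) - harmonicSource e k)

namespace IsState

lemma homInner_three_momentumRHS_le (hs : IsState v e) (hσ : HasProductBounds v e σ)
    (hq : IsGradSchwartz q) :
    homInner 3 v (momentumRHS v e q) ≤
      -homNorm 4 v ^ 2 + (4 + 8 * Fintype.card κ) * n ^ 3 * (homNorm 4 v * σ) := by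
  have hv := fun j => (hs.vel j).isGradSchwartz
  have hlap := fun j => (hs.vel j).lap.isGradSchwartz
  have hadv := fun j => isSchwartz_advect hs.vel (hv j)
  have hforce := fun j => ((hadv j).add (hs.isSchwartz_elasticForce j))
  have hbound : ∀ j, HasL2Bound (lap (advect v (v j) + elasticForce e j))
      (n * (n * (2 ^ 2 * σ) + n * (Fintype.card κ * (2 ^ 3 * σ)))) := fun j =>
    ((hs.hasDerivL2Bound_advect_vel hσ j).add (hadv j).isSmooth
      (hs.isSchwartz_elasticForce j).isSmooth
      (hs.hasDerivL2Bound_elasticForce hσ j)).hasL2Bound_lap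
  have hest := abs_homInner_three_le hv (fun j => (hforce j).isGradSchwartz) hbound
  rw [Fintype.card_fin] at hest
  unfold momentumRHS
  rw [homInner_succ_sub_right hv
      (fun j => ((hs.vel j).lap.sub (hforce j)).isGradSchwartz) (fun j => (hq.pd j).isGradSchwartz),
    homInner_succ_sub_right hv hlap (fun j => (hforce j).isGradSchwartz),
    homInner_succ_lap_self hv, homInner_succ_grad hs.vel hs.divFree hq]
  linarith [neg_le_of_abs_le hest]

lemma abs_l2Inner_lapAdvectComm_le (hs : IsState v e) (hσ : HasProductBounds v e σ) (k : κ) :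
    |l2Inner (lap (lap (e k))) (lapAdvectComm v (lap (e k)))| ≤
      3 * n ^ 3 * (homNorm 5 e * σ) := by
  have hw := (hs.dir k).lap
  have hvs := fun l => (hs.vel l).isSmooth
  have hB := l2Norm_pd_lap_lap_le hs.dir k
  have hadv := fun i => isSchwartz_advect (fun l => ((hs.vel l).pd i).pd i) hw.isGradSchwartz
  have hadv' := fun i => isSchwartz_advect (fun l => (hs.vel l).pd i) (hw.pd i).isGradSchwartz
  have hest := fun i => abs_l2Inner_advect_le (fun l => ((hs.vel l).pd i).pd i)
    ((hs.divFree.pd hvs i).pd (fun l => (hvs l).pd i) i) hw.lap hw hB fun l =>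
    hσ.mul_lap (((IsPartial.base l).succ i).succ i) (.base k) one_le_two rfl
  have hest' := fun i => abs_l2Inner_advect_le (fun l => (hs.vel l).pd i) (hs.divFree.pd hvs i)
    hw.lap (hw.pd i) hB fun l => lap_pd (hs.dir k).isSmooth i ▸
      hσ.mul_lap ((IsPartial.base l).succ i) ((IsPartial.base k).succ i) le_rfl rfl
  rw [lapAdvectComm, l2Inner_sum_right hw.lap fun i => (hadv i).add ((hadv' i).smul 2)]
  refine (Finset.abs_sum_le_sum_abs _ _).trans ((Finset.sum_le_card_nsmul _ _
    (3 * n ^ 2 * (homNorm 5 e * σ)) fun i _ => ?_).trans_eq ?_)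
  · rw [l2Inner_add_right hw.lap (hadv i) ((hadv' i).smul 2), l2Inner_smul_right]
    refine (abs_add_le _ _).trans ?_
    rw [abs_mul, abs_two]
    linarith [hest i, hest' i]
  · rw [Finset.card_univ, Fintype.card_fin, nsmul_eq_mul]
    ring

/-- The transport term of top order drops out because `v` is divergence free. -/
lemma abs_l2Inner_lap_lap_advect_le (hs : IsState v e) (hσ : HasProductBounds v e σ) (k : κ) :
    |l2Inner (lap (lap (e k))) (lap (lap (advect v (e k))))| ≤
      9 * n ^ 3 * (homNorm 5 e * σ) := by
  have hf := (hs.dir k).lap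
  have hvs := fun l => (hs.vel l).isSmooth
  have hB := l2Norm_pd_lap_lap_le hs.dir k
  have hcomm := isSchwartz_lapAdvectComm hs.vel (hs.dir k)
  have hcomm' := isSchwartz_lapAdvectComm hs.vel hf.isGradSchwartz
  rw [lap_advect hvs (hs.dir k).isSmooth,
    lap_add hcomm.isSmooth (isSchwartz_advect hs.vel hf.isGradSchwartz).isSmooth,
    lap_advect hvs hf.isSmooth, l2Inner_add_right hf.lap hcomm.lap
      (hcomm'.add (isSchwartz_advect hs.vel hf.lap.isGradSchwartz)),
    l2Inner_add_right hf.lap hcomm' (isSchwartz_advect hs.vel hf.lap.isGradSchwartz),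
    l2Inner_advect_self hs.vel hs.divFree hf.lap, add_zero]
  refine (abs_add_le _ _).trans ((add_le_add (abs_l2Inner_lap_le hf.lap hcomm.isGradSchwartz hB
    (hs.hasDerivL2Bound_lapAdvectComm hσ k)) (hs.abs_l2Inner_lapAdvectComm_le hσ k)).trans_eq ?_)
  ring

lemma abs_l2Inner_lap_lap_harmonicSource_le (hs : IsState v e) (hσ : HasProductBounds v e σ)
    (k : κ) :
    |l2Inner (lap (lap (e k))) (lap (lap (harmonicSource e k)))| ≤
      27 * Fintype.card κ * n ^ 3 * (homNorm 5 e * σ) := by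
  have hsource := hs.isSchwartz_harmonicSource k
  refine (abs_l2Inner_lap_le (hs.dir k).lap.lap hsource.lap.isGradSchwartz
    (l2Norm_pd_lap_lap_le hs.dir k)
    ((hs.hasDerivL2Bound_harmonicSource hσ k).hasL2Bound_pd_lap hsource.isSmooth)).trans_eq ?_
  ring

lemma homInner_four_directorRHS_le (hs : IsState v e) (hσ : HasProductBounds v e σ) :
    homInner 4 e (directorRHS v e) ≤ -homNorm 5 e ^ 2 +
      Fintype.card κ * (9 + 27 * Fintype.card κ) * n ^ 3 * (homNorm 5 e * σ) := by
  have hlap := fun k => (hs.dir k).lap.isGradSchwartz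
  have hadv := fun k => isSchwartz_advect hs.vel (hs.dir k)
  have hsource := hs.isSchwartz_harmonicSource
  have hest := abs_homInner_four_le (hs.abs_l2Inner_lap_lap_advect_le hσ)
  have hest' := abs_homInner_four_le (hs.abs_l2Inner_lap_lap_harmonicSource_le hσ)
  unfold directorRHS
  rw [homInner_succ_sub_right hs.dir hlap
      (fun k => ((hadv k).sub (hsource k)).isGradSchwartz),
    homInner_succ_sub_right hs.dir (fun k => (hadv k).isGradSchwartz)
      (fun k => (hsource k).isGradSchwartz), homInner_succ_lap_self hs.dir]
  linarith [neg_le_of_abs_le hest, le_of_abs_le hest']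

end IsState

end EnergyInequalities

/-! ### Interpolation and Young's inequality -/

lemma cube_le_of_sq_le {x y z w : ℝ} (hx : 0 ≤ x) (hxz : y ^ 2 ≤ x * z)
    (hyw : z ^ 2 ≤ y * w) : z ^ 3 ≤ x * w ^ 2 := by
  rcases le_or_gt z 0 with hz | hz
  · exact (Odd.pow_nonpos (by decide) hz).trans (by positivity)
  · refine le_of_mul_le_mul_left ?_ hz
    calc z * z ^ 3 = (z ^ 2) ^ 2 := by ring
      _ ≤ (y * w) ^ 2 := by gcongr
      _ = y ^ 2 * w ^ 2 := by ring
      _ ≤ x * z * w ^ 2 := by gcongr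
      _ = z * (x * w ^ 2) := by ring

lemma le_div_add_of_pow_le {z p R L : ℝ} {m k : ℕ} (hp : 0 ≤ p) (hR : 0 ≤ R) (hL : 1 ≤ L)
    (hk : k ≠ 0) (hz : z ^ (m + k) ≤ p ^ m * R ^ k) : z ≤ p / L + L ^ m * R := by
  have hL0 : 0 < L := one_pos.trans_le hL
  rcases le_or_gt z (p / L) with hzp | hzp
  · exact hzp.trans (le_add_of_nonneg_right (by positivity))
  have hz0 : 0 < z := (div_nonneg hp hL0.le).trans_lt hzp
  have hpow : z ^ m * z ^ k ≤ z ^ m * (L ^ m * R) ^ k :=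
    calc z ^ m * z ^ k ≤ p ^ m * R ^ k := by rwa [← pow_add]
      _ ≤ (z * L) ^ m * R ^ k := by
        gcongr
        exact ((div_lt_iff₀ hL0).1 hzp).le
      _ ≤ z ^ m * (L ^ m * R) ^ k := by
        rw [mul_pow, mul_pow, mul_assoc]
        gcongr
        exact le_self_pow₀ (one_le_pow₀ hL) hk
  have hzR := le_of_pow_le_pow_left₀ hk (by positivity)
    (le_of_mul_le_mul_left hpow (pow_pos hz0 m))
  exact hzR.trans (le_add_of_nonneg_left (by positivity))

/-- Sequences `a m` and `b m`, standing for `‖Λᵐv‖` and `‖Λᵐe‖`, which interpolate, with dissipation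
at most `p` and low-order quantities controlled by `R`. -/
structure IsControlled (a b : ℕ → ℝ) (p R : ℝ) : Prop where
  nonneg_vel : ∀ m, 0 ≤ a m
  nonneg_dir : ∀ m, 0 ≤ b m
  vel_sq_le : ∀ m, a (m + 2) ^ 2 ≤ a (m + 1) * a (m + 3)
  dir_sq_le : ∀ m, b (m + 2) ^ 2 ≤ b (m + 1) * b (m + 3)
  vel_four_sq_le : a 4 ^ 2 ≤ p
  dir_five_sq_le : b 5 ^ 2 ≤ p
  nonneg_right : 0 ≤ R
  vel_one_pow_mul_le : a 1 ^ 13 * a 3 ^ 3 ≤ R ^ 2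
  vel_two_pow_le : a 2 ^ 14 ≤ R
  dir_two_pow_le : b 2 ^ 14 ≤ R
  dir_two_pow_le_pow : b 2 ^ 14 ≤ R ^ 5

namespace IsControlled

variable {a b : ℕ → ℝ} {p R L : ℝ}

section Interpolation

variable (h : IsControlled a b p R)
include h

lemma nonneg_left : 0 ≤ p := (sq_nonneg _).trans h.vel_four_sq_le

lemma vel_three_cube_le : a 3 ^ 3 ≤ a 1 * a 4 ^ 2 :=
  cube_le_of_sq_le (h.nonneg_vel 1) (h.vel_sq_le 0) (h.vel_sq_le 1)

lemma dir_four_cube_le : b 4 ^ 3 ≤ b 2 * b 5 ^ 2 :=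
  cube_le_of_sq_le (h.nonneg_dir 2) (h.dir_sq_le 1) (h.dir_sq_le 2)

lemma dir_three_cube_le : b 3 ^ 3 ≤ b 2 ^ 2 * b 5 := by
  rw [mul_comm]
  exact cube_le_of_sq_le (h.nonneg_dir 5)
    (mul_comm (b 3) _ ▸ h.dir_sq_le 2) (mul_comm (b 2) _ ▸ h.dir_sq_le 1)

lemma vel_sq_mul_dir_pow_eight_le : a 2 ^ 2 * b 2 ^ 8 ≤ R := by
  have hR := h.nonneg_right
  refine le_of_pow_le_pow_left₀ (n := 14) (by norm_num) hR ?_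
  calc (a 2 ^ 2 * b 2 ^ 8) ^ 14 = (a 2 ^ 14) ^ 2 * (b 2 ^ 14) ^ 7 * b 2 ^ 14 := by ring
    _ ≤ R ^ 2 * R ^ 7 * R ^ 5 := by
      gcongr
      exacts [h.vel_two_pow_le, h.dir_two_pow_le, h.dir_two_pow_le_pow]
    _ = R ^ 14 := by ring

lemma vel_pow_mul_dir_pow_sixteen_le : a 2 ^ 18 * b 2 ^ 16 ≤ R ^ 5 := by
  have hR := h.nonneg_right
  refine le_of_pow_le_pow_left₀ (n := 14) (by norm_num) (by positivity) ?_
  calc (a 2 ^ 18 * b 2 ^ 16) ^ 14 = (a 2 ^ 14) ^ 18 * (b 2 ^ 14) ^ 7 * (b 2 ^ 14) ^ 9 := by ring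
    _ ≤ R ^ 18 * R ^ 7 * (R ^ 5) ^ 9 := by
      gcongr
      exacts [h.vel_two_pow_le, h.dir_two_pow_le, h.dir_two_pow_le_pow]
    _ = (R ^ 5) ^ 14 := by ring

lemma vel_pow_four_mul_dir_sq_le : a 2 ^ 4 * b 2 ^ 2 ≤ R := by
  have hR := h.nonneg_right
  refine le_of_pow_le_pow_left₀ (n := 7) (by norm_num) hR ?_
  calc (a 2 ^ 4 * b 2 ^ 2) ^ 7 = (a 2 ^ 14) ^ 2 * b 2 ^ 14 := by ring
    _ ≤ R ^ 2 * R ^ 5 := by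
      gcongr
      exacts [h.vel_two_pow_le, h.dir_two_pow_le_pow]
    _ = R ^ 7 := by ring

end Interpolation

variable (h : IsControlled a b p R) (hL : 1 ≤ L)
include h hL

lemma le_of_pow_le {z : ℝ} (m k : ℕ) (hm : m ≤ 7) (hk : k ≠ 0) (hz : z ^ (m + k) ≤ p ^ m * R ^ k) :
    z ≤ p / L + L ^ 7 * R := by
  have hp := h.nonneg_left
  have hR := h.nonneg_right
  refine (le_div_add_of_pow_le hp hR hL hk hz).trans ?_
  gcongr

lemma vel_one_sq_mul_le : a 1 ^ 2 * a 3 * a 4 ≤ p / L + L ^ 7 * R := by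
  have ha1 := h.nonneg_vel 1
  have ha3 := h.nonneg_vel 3
  refine h.le_of_pow_le hL 4 2 (by norm_num) two_ne_zero ?_
  calc (a 1 ^ 2 * a 3 * a 4) ^ 6 = a 1 ^ 12 * a 3 ^ 3 * a 3 ^ 3 * (a 4 ^ 2) ^ 3 := by ring
    _ ≤ a 1 ^ 12 * a 3 ^ 3 * (a 1 * a 4 ^ 2) * (a 4 ^ 2) ^ 3 := by
      gcongr
      exact h.vel_three_cube_le
    _ = (a 4 ^ 2) ^ 4 * (a 1 ^ 13 * a 3 ^ 3) := by ring
    _ ≤ p ^ 4 * R ^ 2 := by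
      gcongr
      exacts [h.vel_four_sq_le, h.vel_one_pow_mul_le]

lemma vel_two_sq_mul_le : a 2 ^ 2 * a 2 * a 3 ≤ p / L + L ^ 7 * R := by
  have ha1 := h.nonneg_vel 1
  have ha3 := h.nonneg_vel 3
  refine h.le_of_pow_le hL 4 2 (by norm_num) two_ne_zero ?_
  calc (a 2 ^ 2 * a 2 * a 3) ^ 6 = (a 2 ^ 2) ^ 9 * a 3 ^ 6 := by ring
    _ ≤ (a 1 * a 3) ^ 9 * a 3 ^ 6 := by
      gcongr
      exact h.vel_sq_le 0
    _ = a 1 ^ 9 * a 3 ^ 3 * (a 3 ^ 3) ^ 4 := by ring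
    _ ≤ a 1 ^ 9 * a 3 ^ 3 * (a 1 * a 4 ^ 2) ^ 4 := by
      gcongr
      exact h.vel_three_cube_le
    _ = (a 4 ^ 2) ^ 4 * (a 1 ^ 13 * a 3 ^ 3) := by ring
    _ ≤ p ^ 4 * R ^ 2 := by
      gcongr
      exacts [h.vel_four_sq_le, h.vel_one_pow_mul_le]

lemma dir_two_sq_mul_le : b 2 ^ 2 * b 4 * b 5 ≤ p / L + L ^ 7 * R := by
  have hb4 := h.nonneg_dir 4
  have hp := h.nonneg_left
  refine h.le_of_pow_le hL 5 1 (by norm_num) one_ne_zero ?_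
  calc (b 2 ^ 2 * b 4 * b 5) ^ 6 = b 2 ^ 12 * (b 4 ^ 3) ^ 2 * (b 5 ^ 2) ^ 3 := by ring
    _ ≤ b 2 ^ 12 * (b 2 * b 5 ^ 2) ^ 2 * (b 5 ^ 2) ^ 3 := by
      gcongr
      exact h.dir_four_cube_le
    _ = (b 5 ^ 2) ^ 5 * (b 2 ^ 14) ^ 1 := by ring
    _ ≤ p ^ 5 * R ^ 1 := by
      gcongr
      exacts [h.dir_five_sq_le, h.dir_two_pow_le]

lemma dir_three_sq_mul_le : b 3 ^ 2 * b 3 * b 4 ≤ p / L + L ^ 7 * R :=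
  have hb4 := h.nonneg_dir 4
  calc b 3 ^ 2 * b 3 * b 4 = b 3 ^ 3 * b 4 := by ring
    _ ≤ b 2 ^ 2 * b 5 * b 4 := by
      gcongr
      exact h.dir_three_cube_le
    _ = b 2 ^ 2 * b 4 * b 5 := by ring
    _ ≤ p / L + L ^ 7 * R := h.dir_two_sq_mul_le hL

lemma dir_two_two_four_sq_le : (b 2 * b 2 * b 4) ^ 2 ≤ p / L + L ^ 7 * R := by
  have hb4 := h.nonneg_dir 4
  refine h.le_of_pow_le hL 2 1 (by norm_num) one_ne_zero ?_
  calc ((b 2 * b 2 * b 4) ^ 2) ^ 3 = b 2 ^ 12 * (b 4 ^ 3) ^ 2 := by ring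
    _ ≤ b 2 ^ 12 * (b 2 * b 5 ^ 2) ^ 2 := by
      gcongr
      exact h.dir_four_cube_le
    _ = (b 5 ^ 2) ^ 2 * (b 2 ^ 14) ^ 1 := by ring
    _ ≤ p ^ 2 * R ^ 1 := by
      gcongr
      exacts [h.dir_five_sq_le, h.dir_two_pow_le]

lemma dir_two_three_three_sq_le : (b 2 * b 3 * b 3) ^ 2 ≤ p / L + L ^ 7 * R := by
  have hb3 := h.nonneg_dir 3
  refine h.le_of_pow_le hL 2 1 (by norm_num) one_ne_zero ?_
  calc ((b 2 * b 3 * b 3) ^ 2) ^ 3 = b 2 ^ 6 * (b 3 ^ 3) ^ 4 := by ring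
    _ ≤ b 2 ^ 6 * (b 2 ^ 2 * b 5) ^ 4 := by
      gcongr
      exact h.dir_three_cube_le
    _ = (b 5 ^ 2) ^ 2 * (b 2 ^ 14) ^ 1 := by ring
    _ ≤ p ^ 2 * R ^ 1 := by
      gcongr
      exacts [h.dir_five_sq_le, h.dir_two_pow_le]

lemma dir_two_sq_mul_vel_le : b 2 ^ 2 * a 3 * a 4 ≤ p / L + L ^ 7 * R := by
  have hp := h.nonneg_left
  refine h.le_of_pow_le hL 3 1 (by norm_num) one_ne_zero ?_
  calc (b 2 ^ 2 * a 3 * a 4) ^ 4 = b 2 ^ 8 * (a 3 ^ 2) ^ 2 * (a 4 ^ 2) ^ 2 := by ring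
    _ ≤ b 2 ^ 8 * (a 2 * a 4) ^ 2 * (a 4 ^ 2) ^ 2 := by
      gcongr
      exact h.vel_sq_le 1
    _ = (a 4 ^ 2) ^ 3 * (a 2 ^ 2 * b 2 ^ 8) ^ 1 := by ring
    _ ≤ p ^ 3 * R ^ 1 := by
      gcongr
      exacts [h.vel_four_sq_le, h.vel_sq_mul_dir_pow_eight_le]

lemma dir_three_sq_mul_vel_le : b 3 ^ 2 * a 2 * a 3 ≤ p / L + L ^ 7 * R := by
  have hb3 := h.nonneg_dir 3
  have hp := h.nonneg_left
  refine h.le_of_pow_le hL 7 5 le_rfl (by norm_num) ?_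
  calc (b 3 ^ 2 * a 2 * a 3) ^ 12 = (b 3 ^ 3) ^ 8 * a 2 ^ 12 * (a 3 ^ 2) ^ 6 := by ring
    _ ≤ (b 2 ^ 2 * b 5) ^ 8 * a 2 ^ 12 * (a 2 * a 4) ^ 6 := by
      gcongr
      exacts [h.dir_three_cube_le, h.vel_sq_le 1]
    _ = (b 5 ^ 2) ^ 4 * (a 4 ^ 2) ^ 3 * (a 2 ^ 18 * b 2 ^ 16) := by ring
    _ ≤ p ^ 4 * p ^ 3 * R ^ 5 := by
      gcongr
      exacts [h.dir_five_sq_le, h.vel_four_sq_le, h.vel_pow_mul_dir_pow_sixteen_le]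
    _ = p ^ 7 * R ^ 5 := by ring

lemma vel_two_sq_mul_dir_le : a 2 ^ 2 * b 3 * b 4 ≤ p / L + L ^ 7 * R := by
  have hb2 := h.nonneg_dir 2
  have hp := h.nonneg_left
  refine h.le_of_pow_le hL 1 1 (by norm_num) one_ne_zero ?_
  calc (a 2 ^ 2 * b 3 * b 4) ^ 2 = a 2 ^ 4 * b 3 ^ 2 * b 4 ^ 2 := by ring
    _ ≤ a 2 ^ 4 * (b 2 * b 4) * b 4 ^ 2 := by
      gcongr
      exact h.dir_sq_le 1
    _ = a 2 ^ 4 * b 2 * b 4 ^ 3 := by ring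
    _ ≤ a 2 ^ 4 * b 2 * (b 2 * b 5 ^ 2) := by
      gcongr
      exact h.dir_four_cube_le
    _ = (b 5 ^ 2) ^ 1 * (a 2 ^ 4 * b 2 ^ 2) ^ 1 := by ring
    _ ≤ p ^ 1 * R ^ 1 := by
      gcongr
      exacts [h.dir_five_sq_le, h.vel_pow_four_mul_dir_sq_le]

end IsControlled

/-- The constant in the bounds for products of derivatives. -/
def sobolevConst : ℝ := trilinearConst + trilinearConst ^ 2

lemma sobolevConst_nonneg : 0 ≤ sobolevConst :=
  add_nonneg trilinearConst_nonneg (sq_nonneg _)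

section ProductBounds

variable {ι κ : Type*} [Fintype ι] [Fintype κ] {f : ι → ScalarField 3} {g : κ → ScalarField 3}

lemma IsPartial.hasL2Bound_mul (hf : ∀ k, IsGradSchwartz (f k)) (hg : ∀ k, IsGradSchwartz (g k))
    {p q : ScalarField 3} {a b : ℕ} {B : ℝ} (hp : IsPartial f a p) (hps : IsSchwartz p)
    (hq : IsPartial g (b + 1) q)
    (hB : homNorm (a + 1) f ^ 2 * homNorm (b + 1) g * homNorm (b + 2) g ≤ B) :
    HasL2Bound (p * q) (√(sobolevConst * B)) := by
  have hqs := hq.isSchwartz_of_pos hg (by omega)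
  refine ⟨hps.mul hqs, Real.le_sqrt_of_sq_le ?_⟩
  have hlhs : 0 ≤ homNorm (a + 1) f ^ 2 * homNorm (b + 1) g * homNorm (b + 2) g :=
    mul_nonneg (mul_nonneg (sq_nonneg _) (homNorm_nonneg _ _)) (homNorm_nonneg _ _)
  calc l2Norm (p * q) ^ 2
      ≤ trilinearConst * (homNorm (a + 1) f ^ 2 * homNorm (b + 1) g * homNorm (b + 2) g) :=
        l2Norm_mul_sq_le hps hqs (fun i => (hp.succ i).l2Norm_le_homNorm hf)
          (hq.l2Norm_le_homNorm hg) fun i => (hq.succ i).l2Norm_le_homNorm hg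
    _ ≤ sobolevConst * B :=
        mul_le_mul (le_add_of_nonneg_right (sq_nonneg _)) hB hlhs sobolevConst_nonneg

lemma IsPartial.hasL2Bound_mul_mul (hg : ∀ k, IsGradSchwartz (g k)) {p q r : ScalarField 3}
    {a b c : ℕ} {B : ℝ} (hp : IsPartial g (a + 1) p) (hq : IsPartial g (b + 1) q)
    (hr : IsPartial g (c + 1) r)
    (hB : (homNorm (a + 2) g * homNorm (b + 2) g * homNorm (c + 2) g) ^ 2 ≤ B) :
    HasL2Bound (p * q * r) (√(sobolevConst * B)) := by
  have hps := hp.isSchwartz_of_pos hg (by omega)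
  have hqs := hq.isSchwartz_of_pos hg (by omega)
  have hrs := hr.isSchwartz_of_pos hg (by omega)
  refine ⟨(hps.mul hqs).mul hrs, Real.le_sqrt_of_sq_le ?_⟩
  have htri := l2Norm_mul_mul_le hps hqs hrs (fun i => (hp.succ i).l2Norm_le_homNorm hg)
    (fun i => (hq.succ i).l2Norm_le_homNorm hg) fun i => (hr.succ i).l2Norm_le_homNorm hg
  calc l2Norm (p * q * r) ^ 2
      ≤ (trilinearConst * (homNorm (a + 2) g * homNorm (b + 2) g * homNorm (c + 2) g)) ^ 2 :=
        pow_le_pow_left₀ (l2Norm_nonneg _) htri 2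
    _ = trilinearConst ^ 2 * (homNorm (a + 2) g * homNorm (b + 2) g * homNorm (c + 2) g) ^ 2 :=
        mul_pow _ _ _
    _ ≤ sobolevConst * B :=
        mul_le_mul (le_add_of_nonneg_left trilinearConst_nonneg) hB (sq_nonneg _)
          sobolevConst_nonneg

end ProductBounds

section StaticEstimate

variable {κ : Type*} [Fintype κ] {v : Fin 3 → ScalarField 3} {e : κ → ScalarField 3}
  {q : ScalarField 3} {p R L : ℝ}

lemma IsState.hasL2Bound_triple (hs : IsState v e)
    (h : IsControlled (homNorm · v) (homNorm · e) p R) (hL : 1 ≤ L) {a b c : ℕ}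
    {f g r : ScalarField 3} (ha : 1 ≤ a) (hb : 1 ≤ b) (hc : 1 ≤ c) (habc : a + b + c = 5)
    (hf : IsPartial e a f) (hg : IsPartial e b g) (hr : IsPartial e c r) :
    HasL2Bound (f * g * r) (√(sobolevConst * (p / L + L ^ 7 * R))) := by
  have h224 := h.dir_two_two_four_sq_le hL
  have h233 := h.dir_two_three_three_sq_le hL
  obtain ⟨rfl, rfl, rfl⟩ | ⟨rfl, rfl, rfl⟩ | ⟨rfl, rfl, rfl⟩ | ⟨rfl, rfl, rfl⟩ |
      ⟨rfl, rfl, rfl⟩ | ⟨rfl, rfl, rfl⟩ : a = 1 ∧ b = 1 ∧ c = 3 ∨ a = 1 ∧ b = 3 ∧ c = 1 ∨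
      a = 3 ∧ b = 1 ∧ c = 1 ∨ a = 1 ∧ b = 2 ∧ c = 2 ∨ a = 2 ∧ b = 1 ∧ c = 2 ∨
      a = 2 ∧ b = 2 ∧ c = 1 := by omega
  all_goals exact hf.hasL2Bound_mul_mul hs.dir hg hr (by linarith)

lemma IsState.hasProductBounds (hs : IsState v e)
    (h : IsControlled (homNorm · v) (homNorm · e) p R) (hL : 1 ≤ L) :
    HasProductBounds v e (√(sobolevConst * (p / L + L ^ 7 * R))) where
  vel {a b p q} hb hab hp hq := by
    have hv := fun l => (hs.vel l).isGradSchwartz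
    have hps := hp.isSchwartz hs.vel
    have hqs := hq.isSchwartz hs.vel
    obtain ⟨rfl, rfl⟩ | ⟨rfl, rfl⟩ | ⟨rfl, rfl⟩ :
      a = 0 ∧ b = 3 ∨ a = 1 ∧ b = 2 ∨ a = 2 ∧ b = 1 := by omega
    · exact hp.hasL2Bound_mul hv hv hps hq (h.vel_one_sq_mul_le hL)
    · exact hp.hasL2Bound_mul hv hv hps hq (h.vel_two_sq_mul_le hL)
    · rw [mul_comm]
      exact hq.hasL2Bound_mul hv hv hqs hp (h.vel_two_sq_mul_le hL)
  dir {a b p q} ha hb hab hp hq := by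
    have hps := hp.isSchwartz_of_pos hs.dir ha
    have hqs := hq.isSchwartz_of_pos hs.dir hb
    obtain ⟨rfl, rfl⟩ | ⟨rfl, rfl⟩ | ⟨rfl, rfl⟩ | ⟨rfl, rfl⟩ :
      a = 1 ∧ b = 4 ∨ a = 2 ∧ b = 3 ∨ a = 3 ∧ b = 2 ∨ a = 4 ∧ b = 1 := by omega
    · exact hp.hasL2Bound_mul hs.dir hs.dir hps hq (h.dir_two_sq_mul_le hL)
    · exact hp.hasL2Bound_mul hs.dir hs.dir hps hq (h.dir_three_sq_mul_le hL)
    · rw [mul_comm]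
      exact hq.hasL2Bound_mul hs.dir hs.dir hqs hp (h.dir_three_sq_mul_le hL)
    · rw [mul_comm]
      exact hq.hasL2Bound_mul hs.dir hs.dir hqs hp (h.dir_two_sq_mul_le hL)
  mixed {a b p q} ha hb hab hp hq := by
    have hv := fun l => (hs.vel l).isGradSchwartz
    have hps := hp.isSchwartz hs.vel
    have hqs := hq.isSchwartz_of_pos hs.dir hb
    obtain ⟨rfl, rfl⟩ | ⟨rfl, rfl⟩ | ⟨rfl, rfl⟩ :
      a = 1 ∧ b = 3 ∨ a = 2 ∧ b = 2 ∨ a = 3 ∧ b = 1 := by omega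
    · exact hp.hasL2Bound_mul hv hs.dir hps hq (h.vel_two_sq_mul_dir_le hL)
    · rw [mul_comm]
      exact hq.hasL2Bound_mul hs.dir hv hqs hp (h.dir_three_sq_mul_vel_le hL)
    · rw [mul_comm]
      exact hq.hasL2Bound_mul hs.dir hv hqs hp (h.dir_two_sq_mul_vel_le hL)
  triple ha hb hc habc hp hq hr := hs.hasL2Bound_triple h hL ha hb hc habc hp hq hr

lemma add_le_of_dissipation {x y X Y c K σ : ℝ} (hL0 : 0 < L) (hL : 16 * c ^ 2 * K ≤ L)
    (hσ : σ ^ 2 = K * ((x ^ 2 + y ^ 2) / L + L ^ 7 * R)) (hX : X ≤ -x ^ 2 + c * (x * σ))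
    (hY : Y ≤ -y ^ 2 + c * (y * σ)) :
    2 * (X + Y) + 1 / 4 * (x ^ 2 + y ^ 2) ≤ 4 * c ^ 2 * K * L ^ 7 * R := by
  have habsorb : 16 * c ^ 2 * K * ((x ^ 2 + y ^ 2) / L) ≤ x ^ 2 + y ^ 2 :=
    (mul_le_mul_of_nonneg_right hL (by positivity)).trans_eq (mul_div_cancel₀ _ hL0.ne')
  have hσ' : 4 * c ^ 2 * σ ^ 2 = 4 * c ^ 2 * K * ((x ^ 2 + y ^ 2) / L)
      + 4 * c ^ 2 * K * L ^ 7 * R := by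
    rw [hσ]
    ring
  have hx : 2 * (c * (x * σ)) ≤ x ^ 2 / 2 + 2 * c ^ 2 * σ ^ 2 := by
    linarith [sq_nonneg (x - 2 * c * σ)]
  have hy : 2 * (c * (y * σ)) ≤ y ^ 2 / 2 + 2 * c ^ 2 * σ ^ 2 := by
    linarith [sq_nonneg (y - 2 * c * σ)]
  linarith [sq_nonneg x, sq_nonneg y]

lemma exists_energy_const (κ : Type*) [Fintype κ] :
    ∃ C > 0, ∀ {v : Fin 3 → ScalarField 3} {e : κ → ScalarField 3} {q : ScalarField 3} {R : ℝ},
      IsState v e → IsGradSchwartz q →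
      IsControlled (homNorm · v) (homNorm · e) (homNorm 4 v ^ 2 + homNorm 5 e ^ 2) R →
      2 * (homInner 3 v (momentumRHS v e q) + homInner 4 e (directorRHS v e))
        + 1 / 4 * (homNorm 4 v ^ 2 + homNorm 5 e ^ 2) ≤ C * R := by
  set cv : ℝ := (4 + 8 * Fintype.card κ) * (3 : ℕ) ^ 3
  set ce : ℝ := Fintype.card κ * (9 + 27 * Fintype.card κ) * (3 : ℕ) ^ 3
  set L := 16 * (cv + ce) ^ 2 * sobolevConst + 1
  have hcv : 0 < cv := by positivity
  have hce : 0 ≤ ce := by positivity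
  have hK := sobolevConst_nonneg
  have hL : 1 ≤ L := le_add_of_nonneg_left (by positivity)
  refine ⟨4 * (cv + ce) ^ 2 * sobolevConst * L ^ 7 + 1, by positivity, fun {v e q R} hs hq h => ?_⟩
  have hbounds := hs.hasProductBounds h hL
  have hmom := hs.homInner_three_momentumRHS_le hbounds hq
  have hdir := hs.homInner_four_directorRHS_le hbounds
  have ha := homNorm_nonneg 4 v
  have hb := homNorm_nonneg 5 e
  have hR := h.nonneg_right
  set σ := √(sobolevConst * ((homNorm 4 v ^ 2 + homNorm 5 e ^ 2) / L + L ^ 7 * R))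
  refine (add_le_of_dissipation (c := cv + ce) (one_pos.trans_le hL) (le_add_of_nonneg_right
    zero_le_one) (Real.sq_sqrt (by positivity)) (hmom.trans ?_) (hdir.trans ?_)).trans
    (mul_le_mul_of_nonneg_right (le_add_of_nonneg_right zero_le_one) hR)
  · gcongr
    exact le_add_of_nonneg_right hce
  · gcongr
    exact le_add_of_nonneg_left hcv.le

end StaticEstimate

/-! ### Vorticity -/

section Vorticity

/-- The null-Lagrangian identity behind `‖∇ × v‖ = ‖∇v‖`: two integrations by parts turn the sum
into `∫ (∇ · v)²`. -/
lemma IsDivFree.sum_l2Inner_pd_pd_swap {n : ℕ} {v : Fin n → ScalarField n} (hdiv : IsDivFree v)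
    (hv : ∀ j, IsSchwartz (v j)) : ∑ i, ∑ j, l2Inner (pd i (v j)) (pd j (v i)) = 0 := by
  refine Finset.sum_eq_zero fun i _ => ?_
  have hparts (j : Fin n) :
      l2Inner (pd i (v j)) (pd j (v i)) = -l2Inner (pd j (pd i (v j))) (v i) :=
    l2Inner_pd_right ((hv j).pd i) (hv i) j
  simp only [hparts, Finset.sum_neg_distrib]
  rw [← l2Inner_sum_left (fun j => ((hv j).pd i).pd j) (hv i),
    hdiv.pd (fun j => (hv j).isSmooth) i]
  simp [l2Inner]

lemma l2Inner_sub_sub_self {n : ℕ} {f g : ScalarField n} (hf : IsSchwartz f)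
    (hg : IsSchwartz g) :
    l2Inner (f - g) (f - g) = l2Inner f f - 2 * l2Inner f g + l2Inner g g := by
  rw [l2Inner_sub_right (hf.sub hg) hf hg, l2Inner_comm _ f, l2Inner_comm _ g,
    l2Inner_sub_right hf hf hg, l2Inner_sub_right hg hf hg, l2Inner_comm g f]
  ring

variable {v : Fin 3 → ScalarField 3}

lemma curl3_zero (v : Fin 3 → ScalarField 3) : curl3 v 0 = pd 1 (v 2) - pd 2 (v 1) := rfl

lemma curl3_one (v : Fin 3 → ScalarField 3) : curl3 v 1 = pd 2 (v 0) - pd 0 (v 2) := rfl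

lemma curl3_two (v : Fin 3 → ScalarField 3) : curl3 v 2 = pd 0 (v 1) - pd 1 (v 0) := rfl

lemma sum_l2Inner_curl3 (hv : ∀ j, IsSchwartz (v j)) (hdiv : IsDivFree v) :
    ∑ j, l2Inner (curl3 v j) (curl3 v j) = homInner 1 v v := by
  have hswap := hdiv.sum_l2Inner_pd_pd_swap hv
  simp only [homInner, Fin.sum_univ_three, curl3_zero, curl3_one, curl3_two,
    l2Inner_sub_sub_self ((hv _).pd _) ((hv _).pd _)] at hswap ⊢
  rw [l2Inner_comm (pd 1 (v 0)), l2Inner_comm (pd 2 (v 1)), l2Inner_comm (pd 0 (v 2))] at hswap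
  linarith

lemma pd_curl3 (hv : ∀ j, IsSmooth (v j)) (i j : Fin 3) :
    pd i (curl3 v j) = curl3 (fun k => pd i (v k)) j := by
  have hpd (a b a' b' : Fin 3) : pd i (pd a (v b) - pd a' (v b')) =
      pd a (pd i (v b)) - pd a' (pd i (v b')) := by
    rw [pd_sub ((hv b).pd a) ((hv b').pd a'), pd_comm (hv b), pd_comm (hv b')]
  fin_cases j
  · exact hpd 1 2 2 1
  · exact hpd 2 0 0 2
  · exact hpd 0 1 1 0

lemma sum_l2Inner_pd_curl3 (hv : ∀ j, IsSchwartz (v j)) (hdiv : IsDivFree v) :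
    ∑ i, ∑ j, l2Inner (pd i (curl3 v j)) (pd i (curl3 v j)) = homInner 2 v v := by
  have hcurl (i : Fin 3) : ∑ j, l2Inner (pd i (curl3 v j)) (pd i (curl3 v j)) =
      ∑ k, ∑ l, l2Inner (pd l (pd i (v k))) (pd l (pd i (v k))) := by
    simp only [pd_curl3 fun j => (hv j).isSmooth]
    exact sum_l2Inner_curl3 (fun j => (hv j).pd i) (hdiv.pd (fun j => (hv j).isSmooth) i)
  simp only [hcurl, homInner]
  simp only [← l2Norm_sq]
  rw [Finset.sum_comm]
  refine Finset.sum_congr rfl fun k _ => ?_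
  rw [Finset.sum_comm, sum_l2Norm_pd_pd_sq (hv k).isGradSchwartz]

end Vorticity

/-! ### Time-dependent functions -/

section TimeDerivative

variable {n : ℕ} {T t : ℝ} {f g : ℝ → ScalarField n}

/-- The time derivative `∂ₜf` of a time-dependent function. -/
def timeDeriv (f : ℝ → ScalarField n) : ℝ → ScalarField n := fun t x => deriv (fun s => f s x) t

lemma IsSmooth.slice (hf : IsSmooth (Function.uncurry f)) (t : ℝ) : IsSmooth (f t) :=
  ContDiff.comp (g := Function.uncurry f) hf (contDiff_const.prodMk contDiff_id)

lemma IsSmooth.hasDerivAt_slice (hf : IsSmooth (Function.uncurry f)) (t : ℝ)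
    (x : EuclideanSpace ℝ (Fin n)) :
    HasDerivAt (fun s => f s x) (fderiv ℝ (Function.uncurry f) (t, x) (1, 0)) t := by
  have hline : HasDerivAt (fun s => (s, x)) (1, 0) t :=
    (hasDerivAt_id t).prodMk (hasDerivAt_const t x)
  exact (hf.differentiable (t, x)).hasFDerivAt.comp_hasDerivAt t hline

lemma timeDeriv_eq_fderiv (hf : IsSmooth (Function.uncurry f)) :
    timeDeriv f = fun t x => fderiv ℝ (Function.uncurry f) (t, x) (1, 0) :=
  funext₂ fun t x => (hf.hasDerivAt_slice t x).deriv

lemma IsSmooth.hasDerivAt_timeDeriv (hf : IsSmooth (Function.uncurry f)) (t : ℝ)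
    (x : EuclideanSpace ℝ (Fin n)) : HasDerivAt (fun s => f s x) (timeDeriv f t x) t :=
  (hf.hasDerivAt_slice t x).differentiableAt.hasDerivAt

lemma pd_slice_eq_fderiv (hf : IsSmooth (Function.uncurry f)) (i : Fin n) :
    (fun t => pd i (f t)) =
      fun t x => fderiv ℝ (Function.uncurry f) (t, x) (0, EuclideanSpace.single i 1) := by
  ext t x
  have hslice : HasFDerivAt (f t) _ x :=
    (hf.differentiable (t, x)).hasFDerivAt.comp x (hasFDerivAt_prodMk_right t x)
  simp [pd, hslice.fderiv]

lemma IsSmooth.uncurry_timeDeriv (hf : IsSmooth (Function.uncurry f)) :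
    IsSmooth (Function.uncurry (timeDeriv f)) := by
  rw [timeDeriv_eq_fderiv hf]
  exact hf.fderiv_apply (1, 0)

lemma IsSmooth.uncurry_pd (hf : IsSmooth (Function.uncurry f)) (i : Fin n) :
    IsSmooth (Function.uncurry fun t => pd i (f t)) := by
  rw [pd_slice_eq_fderiv hf]
  exact hf.fderiv_apply (0, EuclideanSpace.single i 1)

lemma timeDeriv_pd (hf : IsSmooth (Function.uncurry f)) (i : Fin n) :
    timeDeriv (fun t => pd i (f t)) = fun t => pd i (timeDeriv f t) := by
  rw [timeDeriv_eq_fderiv (hf.uncurry_pd i), pd_slice_eq_fderiv hf.uncurry_timeDeriv,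
    pd_slice_eq_fderiv hf, timeDeriv_eq_fderiv hf]
  exact funext₂ fun t x => fderiv_fderiv_apply_comm hf _ _ (t, x)

lemma IsSmooth.uncurry_sum {ι : Type*} [Fintype ι] {f : ι → ℝ → ScalarField n}
    (hf : ∀ i, IsSmooth (Function.uncurry (f i))) : IsSmooth (Function.uncurry (∑ i, f i)) := by
  convert IsSmooth.sum hf using 1
  ext ⟨t, x⟩
  simp [Function.uncurry]

lemma timeDeriv_sum {ι : Type*} [Fintype ι] {f : ι → ℝ → ScalarField n}
    (hf : ∀ i, IsSmooth (Function.uncurry (f i))) :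
    timeDeriv (∑ i, f i) = ∑ i, timeDeriv (f i) := by
  ext t x
  simp only [timeDeriv, Finset.sum_apply]
  exact (HasDerivAt.fun_sum fun i _ => (hf i).hasDerivAt_timeDeriv t x).deriv

lemma lap_slice_eq_sum (f : ℝ → ScalarField n) :
    (fun t => lap (f t)) = ∑ i, fun t => pd i (pd i (f t)) := by
  ext t x
  simp only [lap, Finset.sum_apply]

lemma timeDeriv_lap (hf : IsSmooth (Function.uncurry f)) :
    timeDeriv (fun t => lap (f t)) = fun t => lap (timeDeriv f t) := by
  rw [lap_slice_eq_sum, lap_slice_eq_sum,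
    timeDeriv_sum fun i => (hf.uncurry_pd i).uncurry_pd i]
  exact Finset.sum_congr rfl fun i _ => by
    rw [timeDeriv_pd (hf.uncurry_pd i), timeDeriv_pd hf]

/-! ### Schwartz families -/

namespace SchwartzFamily

lemma exists_eventually_le (hf : SchwartzFamily T f) (ht : t ∈ Set.Ioo 0 T) (k l : ℕ) :
    ∃ C, ∀ᶠ s in nhds t, ∀ x, ‖x‖ ^ k * ‖iteratedFDeriv ℝ l (f s) x‖ ≤ C := by
  obtain ⟨ε, hε, C, hC⟩ := hf t ht k l
  refine ⟨C, ?_⟩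
  filter_upwards [isOpen_Ioo.mem_nhds ht, Metric.ball_mem_nhds t hε] with s hs hst
  exact hC s hs hst

protected lemma isSchwartz (hsm : IsSmooth (f t)) (hf : SchwartzFamily T f)
    (ht : t ∈ Set.Ioo 0 T) : IsSchwartz (f t) :=
  ⟨⟨f t, hsm, fun k l =>
    let ⟨C, hC⟩ := hf.exists_eventually_le ht k l
    ⟨C, hC.self_of_nhds⟩⟩, rfl⟩

protected lemma pd (hsm : ∀ t, IsSmooth (f t)) (hf : SchwartzFamily T f) (i : Fin n) :
    SchwartzFamily T fun t => pd i (f t) := by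
  intro t₀ ht₀ k l
  obtain ⟨ε, hε, C, hC⟩ := hf t₀ ht₀ k (l + 1)
  refine ⟨ε, hε, C, fun t ht htt x => le_trans ?_ (hC t ht htt x)⟩
  have hpd := norm_iteratedFDeriv_clm_apply_const (𝕜 := ℝ)
    (c := (EuclideanSpace.single i 1 : EuclideanSpace ℝ (Fin n))) (x := x) (n := l)
    (hsm t).fderiv.contDiffAt (by exact_mod_cast le_top)
  rw [norm_iteratedFDeriv_fderiv, PiLp.norm_single, norm_one, one_mul] at hpd
  exact mul_le_mul_of_nonneg_left hpd (by positivity)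

protected lemma add (hsf : ∀ t, IsSmooth (f t)) (hsg : ∀ t, IsSmooth (g t))
    (hf : SchwartzFamily T f) (hg : SchwartzFamily T g) : SchwartzFamily T (f + g) := by
  intro t₀ ht₀ k l
  obtain ⟨ε, hε, C, hC⟩ := hf t₀ ht₀ k l
  obtain ⟨ε', hε', C', hC'⟩ := hg t₀ ht₀ k l
  refine ⟨min ε ε', lt_min hε hε', C + C', fun t ht htt x => ?_⟩
  have hadd : iteratedFDeriv ℝ l ((f + g) t) x =
      iteratedFDeriv ℝ l (f t) x + iteratedFDeriv ℝ l (g t) x :=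
    iteratedFDeriv_add_apply (ContDiff.of_le (hsf t) (by exact_mod_cast le_top)).contDiffAt
      (ContDiff.of_le (hsg t) (by exact_mod_cast le_top)).contDiffAt
  calc ‖x‖ ^ k * ‖iteratedFDeriv ℝ l ((f + g) t) x‖
      ≤ ‖x‖ ^ k * ‖iteratedFDeriv ℝ l (f t) x‖ + ‖x‖ ^ k * ‖iteratedFDeriv ℝ l (g t) x‖ := by
        rw [hadd, ← mul_add]
        gcongr
        exact norm_add_le _ _
    _ ≤ C + C' := add_le_add (hC t ht (htt.trans_le (min_le_left _ _)) x)
        (hC' t ht (htt.trans_le (min_le_right _ _)) x)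

protected lemma zero : SchwartzFamily T (0 : ℝ → ScalarField n) := fun _ _ _ _ =>
  ⟨1, one_pos, 0, fun _ _ _ _ => by simp⟩

protected lemma sum {ι : Type*} [Fintype ι] {f : ι → ℝ → ScalarField n}
    (hsm : ∀ i t, IsSmooth (f i t)) (hf : ∀ i, SchwartzFamily T (f i)) :
    SchwartzFamily T (∑ i, f i) :=
  (Finset.sum_induction f (fun g => (∀ t, IsSmooth (g t)) ∧ SchwartzFamily T g)
    (fun _ _ h h' => ⟨fun t => (h.1 t).add (h'.1 t), h.2.add h.1 h'.1 h'.2⟩)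
    ⟨fun _ => IsSchwartz.zero.isSmooth, .zero⟩ fun i _ => ⟨hsm i, hf i⟩).2

lemma exists_eventually_le_rpow (hf : SchwartzFamily T f) (ht : t ∈ Set.Ioo 0 T) (m : ℕ) :
    ∃ C, ∀ᶠ s in nhds t, ∀ x, ‖f s x‖ ≤ C * (1 + ‖x‖) ^ (-(m : ℝ)) := by
  obtain ⟨C₀, h₀⟩ := hf.exists_eventually_le ht 0 0
  obtain ⟨C, h⟩ := hf.exists_eventually_le ht m 0
  refine ⟨2 ^ (m - 1) * (C₀ + C), ?_⟩
  filter_upwards [h₀, h] with s hs₀ hs x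
  replace hs₀ := hs₀ x
  replace hs := hs x
  rw [norm_iteratedFDeriv_zero] at hs hs₀
  have hpow : (1 + ‖x‖) ^ m ≤ 2 ^ (m - 1) * (1 + ‖x‖ ^ m) := by
    simpa only [one_pow] using add_pow_le zero_le_one (norm_nonneg x) m
  rw [rpow_neg (by positivity), rpow_natCast, ← div_eq_mul_inv, le_div_iff₀ (by positivity)]
  calc ‖f s x‖ * (1 + ‖x‖) ^ m ≤ ‖f s x‖ * (2 ^ (m - 1) * (1 + ‖x‖ ^ m)) := by gcongr
    _ = 2 ^ (m - 1) * (‖x‖ ^ 0 * ‖f s x‖ + ‖x‖ ^ m * ‖f s x‖) := by ring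
    _ ≤ 2 ^ (m - 1) * (C₀ + C) := by gcongr

end SchwartzFamily

/-- Jointly smooth time-dependent functions that are Schwartz in space together with their time
derivative, locally uniformly in time. -/
structure IsSchwartzFlow (T : ℝ) (f : ℝ → ScalarField n) : Prop where
  smooth : IsSmooth (Function.uncurry f)
  decay : SchwartzFamily T f
  decay_timeDeriv : SchwartzFamily T (timeDeriv f)

namespace IsSchwartzFlow

protected lemma isSchwartz (hf : IsSchwartzFlow T f) (ht : t ∈ Set.Ioo 0 T) :
    IsSchwartz (f t) :=
  hf.decay.isSchwartz (hf.smooth.slice t) ht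

protected lemma isSchwartz_timeDeriv (hf : IsSchwartzFlow T f) (ht : t ∈ Set.Ioo 0 T) :
    IsSchwartz (timeDeriv f t) :=
  hf.decay_timeDeriv.isSchwartz (hf.smooth.uncurry_timeDeriv.slice t) ht

protected lemma pd (hf : IsSchwartzFlow T f) (i : Fin n) :
    IsSchwartzFlow T fun t => pd i (f t) where
  smooth := hf.smooth.uncurry_pd i
  decay := hf.decay.pd hf.smooth.slice i
  decay_timeDeriv := by
    rw [timeDeriv_pd hf.smooth]
    exact hf.decay_timeDeriv.pd hf.smooth.uncurry_timeDeriv.slice i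

protected lemma sum {ι : Type*} [Fintype ι] {f : ι → ℝ → ScalarField n}
    (hf : ∀ i, IsSchwartzFlow T (f i)) : IsSchwartzFlow T (∑ i, f i) where
  smooth := .uncurry_sum fun i => (hf i).smooth
  decay := .sum (fun i => (hf i).smooth.slice) fun i => (hf i).decay
  decay_timeDeriv := by
    rw [timeDeriv_sum fun i => (hf i).smooth]
    exact .sum (fun i => (hf i).smooth.uncurry_timeDeriv.slice) fun i => (hf i).decay_timeDeriv

/-- Differentiation under the integral sign: near time `t` the integrand `2 f ∂ₜf` is dominated by
a multiple of the integrable function `(1 + |x|)⁻⁽ⁿ⁺¹⁾`. -/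
lemma hasDerivAt_l2Inner_self (hf : IsSchwartzFlow T f) (ht : t ∈ Set.Ioo 0 T) :
    HasDerivAt (fun s => l2Inner (f s) (f s)) (2 * l2Inner (f t) (timeDeriv f t)) t := by
  obtain ⟨C, hC⟩ := hf.decay.exists_eventually_le_rpow ht 0
  obtain ⟨C', hC'⟩ := hf.decay_timeDeriv.exists_eventually_le_rpow ht (n + 1)
  have hderiv := (hasDerivAt_integral_of_dominated_loc_of_deriv_le (μ := volume)
    (F := fun s x => f s x * f s x)
    (F' := fun s x => timeDeriv f s x * f s x + f s x * timeDeriv f s x)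
    (bound := fun x => 2 * (C * (C' * (1 + ‖x‖) ^ (-((n + 1 : ℕ) : ℝ)))))
    (hC.and hC') (.of_forall fun s => ?_) ((hf.isSchwartz ht).mul (hf.isSchwartz ht)).integrable
    ?_ (.of_forall fun x s hs => ?_) ?_ (.of_forall fun x s _ => ?_)).2
  · refine hderiv.congr_deriv ?_
    rw [← l2Inner_smul_right]
    refine integral_congr_ae (.of_forall fun x => ?_)
    simp only [Pi.smul_apply, smul_eq_mul]
    ring
  · have hcont := (hf.smooth.slice s).differentiable.continuous
    exact (hcont.mul hcont).aestronglyMeasurable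
  · have hcont := (hf.isSchwartz ht).isSmooth.differentiable.continuous
    have hcont' := (hf.isSchwartz_timeDeriv ht).isSmooth.differentiable.continuous
    exact ((hcont'.mul hcont).add (hcont.mul hcont')).aestronglyMeasurable
  · have hle : ‖f s x‖ ≤ C := by simpa using hs.1 x
    rw [mul_comm, ← two_mul, norm_mul, norm_mul, Real.norm_two]
    have hC_nonneg : 0 ≤ C := (norm_nonneg _).trans hle
    gcongr
    exact hs.2 x
  · refine ((integrable_one_add_norm ?_).const_mul C').const_mul C |>.const_mul 2
    simp
  · exact (hf.smooth.hasDerivAt_timeDeriv s x).mul (hf.smooth.hasDerivAt_timeDeriv s x)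

end IsSchwartzFlow

/-- Jointly smooth time-dependent functions whose spatial partial derivatives are
`IsSchwartzFlow`. -/
structure IsGradSchwartzFlow (T : ℝ) (f : ℝ → ScalarField n) : Prop where
  smooth : IsSmooth (Function.uncurry f)
  pd (i : Fin n) : IsSchwartzFlow T fun t => pd i (f t)

protected lemma IsSchwartzFlow.isGradSchwartzFlow (hf : IsSchwartzFlow T f) :
    IsGradSchwartzFlow T f :=
  ⟨hf.smooth, hf.pd⟩

namespace IsGradSchwartzFlow

protected lemma isGradSchwartz (hf : IsGradSchwartzFlow T f) (ht : t ∈ Set.Ioo 0 T) :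
    IsGradSchwartz (f t) :=
  ⟨hf.smooth.slice t, fun i => (hf.pd i).isSchwartz ht⟩

protected lemma lap (hf : IsGradSchwartzFlow T f) : IsSchwartzFlow T fun t => lap (f t) := by
  rw [lap_slice_eq_sum]
  exact .sum fun i => (hf.pd i).pd i

end IsGradSchwartzFlow

lemma hasDerivAt_homNorm_sq {ι : Type*} [Fintype ι] {f : ι → ℝ → ScalarField n}
    (hf : ∀ k, IsGradSchwartzFlow T (f k)) (ht : t ∈ Set.Ioo 0 T) (m : ℕ) :
    HasDerivAt (fun s => homNorm (m + 1) (fun k => f k s) ^ 2)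
      (2 * homInner (m + 1) (fun k => f k t) fun k => timeDeriv (f k) t) t := by
  simp only [homNorm_sq]
  induction m using Nat.twoStepInduction generalizing f with
  | zero =>
    simp only [homInner, Finset.mul_sum]
    refine HasDerivAt.fun_sum fun k _ => HasDerivAt.fun_sum fun i _ => ?_
    rw [← congr_fun (timeDeriv_pd (hf k).smooth i) t]
    exact ((hf k).pd i).hasDerivAt_l2Inner_self ht
  | one =>
    simp only [homInner, Finset.mul_sum]
    refine HasDerivAt.fun_sum fun k _ => ?_
    rw [← congr_fun (timeDeriv_lap (hf k).smooth) t]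
    exact (hf k).lap.hasDerivAt_l2Inner_self ht
  | more _ ih _ =>
    have hlap := ih fun k => (hf k).lap.isGradSchwartzFlow
    simp only [timeDeriv_lap (hf _).smooth] at hlap
    exact hlap

end TimeDerivative

/-! ### Solutions of the Ericksen–Leslie system -/

section Solution

variable {n m : ℕ}

/-- The component functions of a vector-valued map. -/
def components (w : EuclideanSpace ℝ (Fin n) → EuclideanSpace ℝ (Fin m)) :
    Fin m → ScalarField n :=
  fun k x => w x k

lemma IsSmooth.uncurry_components
    {w : ℝ → EuclideanSpace ℝ (Fin n) → EuclideanSpace ℝ (Fin m)}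
    (hw : ContDiff ℝ ∞ (Function.uncurry w)) (k : Fin m) :
    IsSmooth (Function.uncurry fun t => components (w t) k) :=
  (EuclideanSpace.proj k : EuclideanSpace ℝ (Fin m) →L[ℝ] ℝ).contDiff.comp hw

namespace IsNLC

variable {T t : ℝ} {u : ℝ → EuclideanSpace ℝ (Fin n) → EuclideanSpace ℝ (Fin n)}
  {P : ℝ → EuclideanSpace ℝ (Fin n) → ℝ}
  {d : ℝ → EuclideanSpace ℝ (Fin n) → EuclideanSpace ℝ (Fin 3)}
  (hN : IsNLC n T u P d)
include hN

lemma timeDeriv_velocity (ht : t ∈ Set.Ioo 0 T) (j : Fin n) :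
    timeDeriv (fun s => components (u s) j) t =
      momentumRHS (components (u t)) (components (d t)) (P t) j := by
  ext x
  have hmomentum : timeDeriv (fun s => components (u s) j) t x - lap (components (u t) j) x
      + (∑ i, components (u t) i x * pd i (components (u t) j) x) + pd j (P t) x =
      -∑ i, pd i (fun y => ∑ k, pd i (components (d t) k) y * pd j (components (d t) k) y) x :=
    hN.momentum t ht x j
  have hforce (i : Fin n) : (∑ k, pd i (components (d t) k) * pd j (components (d t) k)) =
      fun y => ∑ k, pd i (components (d t) k) y * pd j (components (d t) k) y := by
    ext y
    simp only [Finset.sum_apply, Pi.mul_apply]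
  simp only [momentumRHS, advect, elasticForce, hforce, Pi.sub_apply, Pi.add_apply,
    Finset.sum_apply, Pi.mul_apply]
  linarith

lemma timeDeriv_director (ht : t ∈ Set.Ioo 0 T) (k : Fin 3) :
    timeDeriv (fun s => components (d s) k) t =
      directorRHS (components (u t)) (components (d t)) k := by
  ext x
  have hdirector : timeDeriv (fun s => components (d s) k) t x
      + ∑ i, components (u t) i x * pd i (components (d t) k) x =
      lap (components (d t) k) x
        + (∑ i, ∑ l, pd i (components (d t) l) x ^ 2) * components (d t) k x :=
    hN.director t ht x k
  simp only [Finset.sum_mul, pow_two] at hdirector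
  simp only [directorRHS, advect, harmonicSource, Pi.sub_apply, Finset.sum_apply, Pi.mul_apply]
  linarith

variable (hS : SchwartzDecay n T u d)
include hS

lemma isSchwartzFlow_velocity (j : Fin n) :
    IsSchwartzFlow T fun s => components (u s) j where
  smooth := .uncurry_components hN.smooth_u j
  decay := hS.1 j
  decay_timeDeriv := hS.2.1 j

lemma isGradSchwartzFlow_director (k : Fin 3) :
    IsGradSchwartzFlow T fun s => components (d s) k where
  smooth := .uncurry_components hN.smooth_d k
  pd i :=
    { smooth := (IsSmooth.uncurry_components hN.smooth_d k).uncurry_pd i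
      decay := hS.2.2.1 i k
      decay_timeDeriv := hS.2.2.2 i k }

lemma isState (ht : t ∈ Set.Ioo 0 T) : IsState (components (u t)) (components (d t)) where
  vel j := (hN.isSchwartzFlow_velocity hS j).isSchwartz ht
  divFree := by
    ext x
    rw [Finset.sum_apply]
    exact hN.divfree t ht x
  dir k := (hN.isGradSchwartzFlow_director hS k).isGradSchwartz ht
  abs_dir_le_one k x := (PiLp.norm_apply_le (d t x) k).trans_eq (hN.unit t ht x)

/-- The momentum equation expresses `∇P` through Schwartz functions. -/
lemma isGradSchwartz_pressure (ht : t ∈ Set.Ioo 0 T) : IsGradSchwartz (P t) := by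
  refine ⟨IsSmooth.slice hN.smooth_P t, fun j => ?_⟩
  have hs := hN.isState hS ht
  have hpressure : pd j (P t) = lap (components (u t) j)
      - (advect (components (u t)) (components (u t) j) + elasticForce (components (d t)) j)
      - timeDeriv (fun s => components (u s) j) t := by
    rw [hN.timeDeriv_velocity ht, momentumRHS, sub_sub_cancel]
  rw [hpressure]
  exact ((hs.vel j).lap.sub ((isSchwartz_advect hs.vel (hs.vel j).isGradSchwartz).add
    (hs.isSchwartz_elasticForce j))).sub ((hN.isSchwartzFlow_velocity hS j).isSchwartz_timeDeriv ht)

lemma hasDerivAt_homNorm_velocity_sq (ht : t ∈ Set.Ioo 0 T) (m : ℕ) :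
    HasDerivAt (fun s => homNorm (m + 1) (components (u s)) ^ 2)
      (2 * homInner (m + 1) (components (u t))
        (momentumRHS (components (u t)) (components (d t)) (P t))) t := by
  rw [← funext (hN.timeDeriv_velocity ht)]
  exact hasDerivAt_homNorm_sq
    (fun j => (hN.isSchwartzFlow_velocity hS j).isGradSchwartzFlow) ht m

lemma hasDerivAt_homNorm_director_sq (ht : t ∈ Set.Ioo 0 T) (m : ℕ) :
    HasDerivAt (fun s => homNorm (m + 1) (components (d s)) ^ 2)
      (2 * homInner (m + 1) (components (d t))
        (directorRHS (components (u t)) (components (d t)))) t := by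
  rw [← funext (hN.timeDeriv_director ht)]
  exact hasDerivAt_homNorm_sq (hN.isGradSchwartzFlow_director hS) ht m

end IsNLC

lemma integral_sq_eq_l2Inner (f : ScalarField n) : ∫ x, f x ^ 2 = l2Inner f f := by
  simp only [l2Inner, pow_two]

section Norms

variable (u : EuclideanSpace ℝ (Fin n) → EuclideanSpace ℝ (Fin n))
  (d : EuclideanSpace ℝ (Fin n) → EuclideanSpace ℝ (Fin 3))

lemma lapL2_eq_homNorm : lapL2 d = homNorm 2 (components d) := by
  simp only [lapL2, integral_sq_eq_l2Inner]
  rfl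

lemma bilapL2_eq_homNorm : bilapL2 d = homNorm 4 (components d) := by
  simp only [bilapL2, integral_sq_eq_l2Inner]
  rfl

lemma gradBilapL2_eq_homNorm : gradBilapL2 d = homNorm 5 (components d) := by
  simp only [gradBilapL2, integral_sq_eq_l2Inner]
  rw [Finset.sum_comm]
  rfl

lemma gradLapL2u_eq_homNorm : gradLapL2u u = homNorm 3 (components u) := by
  simp only [gradLapL2u, integral_sq_eq_l2Inner]
  rw [Finset.sum_comm]
  rfl

lemma bilapL2u_eq_homNorm : bilapL2u u = homNorm 4 (components u) := by
  simp only [bilapL2u, integral_sq_eq_l2Inner]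
  rfl

variable {w : EuclideanSpace ℝ (Fin 3) → EuclideanSpace ℝ (Fin 3)}

lemma vortL2_eq_homNorm (hw : ∀ j, IsSchwartz (components w j))
    (hdiv : IsDivFree (components w)) : vortL2 w = homNorm 1 (components w) := by
  rw [homNorm, ← sum_l2Inner_curl3 hw hdiv]
  simp only [vortL2, integral_sq_eq_l2Inner]
  rfl

lemma gradVortL2_eq_homNorm (hw : ∀ j, IsSchwartz (components w j))
    (hdiv : IsDivFree (components w)) : gradVortL2 w = homNorm 2 (components w) := by
  rw [homNorm, ← sum_l2Inner_pd_curl3 hw hdiv]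
  simp only [gradVortL2, integral_sq_eq_l2Inner]
  rfl

end Norms

lemma isControlled_homNorm {ι κ : Type*} [Fintype ι] [Fintype κ] {v : ι → ScalarField n}
    {e : κ → ScalarField n} (hv : ∀ k, IsGradSchwartz (v k)) (he : ∀ k, IsGradSchwartz (e k)) :
    IsControlled (homNorm · v) (homNorm · e) (homNorm 4 v ^ 2 + homNorm 5 e ^ 2)
      (homNorm 1 v ^ ((13 : ℝ) / 2) * homNorm 3 v ^ ((3 : ℝ) / 2) + homNorm 2 e ^ 14
        + homNorm 2 e ^ ((38 : ℝ) / 7) + homNorm 2 e ^ ((14 : ℝ) / 5) + homNorm 2 v ^ 14) := by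
  have ha := fun m => homNorm_nonneg m v
  have hb := fun m => homNorm_nonneg m e
  have hmix : 0 ≤ homNorm 1 v ^ ((13 : ℝ) / 2) * homNorm 3 v ^ ((3 : ℝ) / 2) :=
    mul_nonneg (rpow_nonneg (ha 1) _) (rpow_nonneg (ha 3) _)
  have hb14 : 0 ≤ homNorm 2 e ^ 14 := pow_nonneg (hb 2) _
  have hb38 : 0 ≤ homNorm 2 e ^ ((38 : ℝ) / 7) := rpow_nonneg (hb 2) _
  have hb145 : 0 ≤ homNorm 2 e ^ ((14 : ℝ) / 5) := rpow_nonneg (hb 2) _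
  have ha14 : 0 ≤ homNorm 2 v ^ 14 := pow_nonneg (ha 2) _
  refine ⟨ha, hb, homNorm_sq_le_mul hv, homNorm_sq_le_mul he,
    le_add_of_nonneg_right (sq_nonneg _), le_add_of_nonneg_left (sq_nonneg _), by positivity,
    ?_, by linarith, by linarith, ?_⟩
  · calc homNorm 1 v ^ 13 * homNorm 3 v ^ 3
        = (homNorm 1 v ^ ((13 : ℝ) / 2) * homNorm 3 v ^ ((3 : ℝ) / 2)) ^ 2 := by
          rw [mul_pow, ← rpow_mul_natCast (ha 1), ← rpow_mul_natCast (ha 3)]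
          norm_num only [Nat.cast_ofNat, rpow_ofNat]
      _ ≤ _ := by
          gcongr
          linarith
  · calc homNorm 2 e ^ 14 = (homNorm 2 e ^ ((14 : ℝ) / 5)) ^ 5 := by
          rw [← rpow_mul_natCast (hb 2)]
          norm_num only [Nat.cast_ofNat, rpow_ofNat]
      _ ≤ _ := by
          gcongr
          linarith

end Solution

/-- Differential inequality at the H³×H⁴ level:
(d/dt)(‖∇Δu‖² + ‖Δ²d‖²) + ¼(‖Δ²u‖² + ‖∇Δ²d‖²)
  ≤ C(‖ω‖^{13/2}‖∇Δu‖^{3/2} + ‖Δd‖¹⁴ + ‖Δd‖^{38/7} + ‖Δd‖^{14/5} + ‖∇ω‖¹⁴). -/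
theorem statement15 :
    ∃ C : ℝ, 0 < C ∧
      ∀ (T : ℝ) (u : ℝ → EuclideanSpace ℝ (Fin 3) → EuclideanSpace ℝ (Fin 3))
        (P : ℝ → EuclideanSpace ℝ (Fin 3) → ℝ)
        (d : ℝ → EuclideanSpace ℝ (Fin 3) → EuclideanSpace ℝ (Fin 3)),
        IsNLC 3 T u P d → SchwartzDecay 3 T u d →
        ∀ t ∈ Set.Ioo (0:ℝ) T, ∃ D : ℝ,
          HasDerivAt (fun s => gradLapL2u (u s) ^ 2 + bilapL2 (d s) ^ 2) D t ∧
          D + (1/4 : ℝ) * (bilapL2u (u t) ^ 2 + gradBilapL2 (d t) ^ 2)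
            ≤ C * (vortL2 (u t) ^ ((13 : ℝ)/2) * gradLapL2u (u t) ^ ((3 : ℝ)/2)
                + lapL2 (d t) ^ (14 : ℕ)
                + lapL2 (d t) ^ ((38 : ℝ)/7)
                + lapL2 (d t) ^ ((14 : ℝ)/5)
                + gradVortL2 (u t) ^ (14 : ℕ)) := by
  obtain ⟨C, hC, henergy⟩ := exists_energy_const (Fin 3)
  refine ⟨C, hC, fun T u P d hN hS t ht => ?_⟩
  have hs := hN.isState hS ht
  simp only [gradLapL2u_eq_homNorm, bilapL2_eq_homNorm, bilapL2u_eq_homNorm,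
    gradBilapL2_eq_homNorm, lapL2_eq_homNorm, vortL2_eq_homNorm hs.vel hs.divFree,
    gradVortL2_eq_homNorm hs.vel hs.divFree]
  refine ⟨_, (hN.hasDerivAt_homNorm_velocity_sq hS ht 2).add
    (hN.hasDerivAt_homNorm_director_sq hS ht 3), ?_⟩
  rw [← mul_add]
  exact henergy hs (hN.isGradSchwartz_pressure hS ht)
    (isControlled_homNorm (fun j => (hs.vel j).isGradSchwartz) hs.dir)
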